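/- Fix finite nonempty sets SP₀, SQ₀, SP₁, SQ₁ ⊂ ℕ with 0 ∈ SP₀ ∪ SQ₀, 0 ∈ SP₁ ∪ SQ₁, gcd of the nonzero elements of SP₀ ∪ SQ₀ ∪ SP₁ ∪ SQ₁ equal to 1, a₀n = max(SP₀ ∪ SQ₀) ≥ 1, a₁m = max(SP₁ ∪ SQ₁) ≥ 1. Write L₀ = min SQ₀, R₀ = max SQ₀, L₁ = min SQ₁, R₁ = max SQ₁, and define F = (R₀ − L₀) + [0 ∈ SQ₁]·L₀ + [a₁m ∈ SQ₁]·(a₀n − R₀), F' = (R₁ − L₁) + [0 ∈ SQ₀]·L₁ + [a₀n ∈ SQ₀]·(a₁m − R₁), and δ = (a₀n − R₀)·L₁ − L₀·(a₁m − R₁). Assume F ≠ a₀n. Then: (a) either (0 ∉ SQ₀ and 0 ∉ SQ₁) or (a₀n ∉ SQ₀ and a₁m ∉ SQ₁), and F' ≠ a₁m; (b) for generic coefficients, for every irreducible φ ∈ ℂ[x,y] with φ(P₀/Q₀, P₁/Q₁) = 0 in ℂ(t): the points (a₁m, F) and (F', a₀n) are vertices of the Newton polygon N(φ); if it is not the case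 that all four conditions 0 ∉ SQ₀, 0 ∉ SQ₁, a₀n ∉ SQ₀, a₁m ∉ SQ₁ hold with δ ≠ 0, then the segment joining (a₁m, F) and (F', a₀n) is contained in the boundary of N(φ) (it is an edge of N(φ)); otherwise the point p, defined as p = (a₁m − L₁, R₀) if δ < 0 and p = (R₁, a₀n − L₀) if δ > 0, is a vertex of N(φ) and the two segments joining (a₁m, F) to p and p to (F', a₀n) are contained in the boundary of N(φ). -/

import Mathlib

open Polynomial

/-- The univariate polynomial with support `S` and coefficient vector `c`. -/
noncomputable def polyOfCoeffs (S : Finset ℕ) (c : {s // s ∈ S} → ℂ) : Polynomial ℂ :=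
  ∑ s ∈ S.attach, Polynomial.C (c s) * Polynomial.X ^ (s : ℕ)

/-- The image of that polynomial in the field of rational functions `ℂ(t)`. -/
noncomputable def ratFuncOf (S : Finset ℕ) (c : {s // s ∈ S} → ℂ) : RatFunc ℂ :=
  algebraMap (Polynomial ℂ) (RatFunc ℂ) (polyOfCoeffs S c)

/-- The Newton polygon of a bivariate polynomial: the convex hull in `ℝ²` of its support. -/
noncomputable def newtonPolygon (φ : MvPolynomial (Fin 2) ℂ) : Set (ℝ × ℝ) :=
  convexHull ℝ ((fun d : Fin 2 →₀ ℕ => ((d 0 : ℝ), (d 1 : ℝ))) '' ↑φ.support)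

/-- `φ(P₀/Q₀, P₁/Q₁) = 0` in `ℂ(t)`, where `P₀, Q₀, P₁, Q₁` have supports
`SS 0, SS 1, SS 2, SS 3` and coefficient vector `c`. -/
def vanishesDiff (SS : Fin 4 → Finset ℕ)
    (c : (Σ i : Fin 4, {s // s ∈ SS i}) → ℂ) (φ : MvPolynomial (Fin 2) ℂ) : Prop :=
  MvPolynomial.aeval
    ![ratFuncOf (SS 0) (fun s => c ⟨0, s⟩) / ratFuncOf (SS 1) (fun s => c ⟨1, s⟩),
      ratFuncOf (SS 2) (fun s => c ⟨2, s⟩) / ratFuncOf (SS 3) (fun s => c ⟨3, s⟩)] φ = 0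

/-- Coefficient of `x^i y^j`. -/
noncomputable def bcf {A : Type*} [CommRing A] (p : A[X][X]) (i j : ℕ) : A := (p.coeff j).coeff i

/-- weighted degree bound -/
def WB (w0 w1 : ℤ) (H : ℤ) (p : ℂ[X][X]) : Prop :=
  ∀ i j : ℕ, bcf p i j ≠ 0 → w0 * i + w1 * j ≤ H

lemma WB.zero (w0 w1 H : ℤ) : WB w0 w1 H 0 := by
  intro i j h; simp [bcf] at h

lemma WB.mono {w0 w1 H H' : ℤ} {p : ℂ[X][X]} (h : WB w0 w1 H p) (hH : H ≤ H') : WB w0 w1 H' p :=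
  fun i j hij => (h i j hij).trans hH

lemma WB.add {w0 w1 H : ℤ} {p q : ℂ[X][X]} (hp : WB w0 w1 H p) (hq : WB w0 w1 H q) :
    WB w0 w1 H (p + q) := by
  intro i j h
  by_cases h1 : bcf p i j = 0
  · by_cases h2 : bcf q i j = 0
    · exact absurd (by simp only [bcf, coeff_add] at *; simp [h1, h2]) h
    · exact hq i j h2
  · exact hp i j h1

lemma WB.neg {w0 w1 H : ℤ} {p : ℂ[X][X]} (hp : WB w0 w1 H p) : WB w0 w1 H (-p) := by
  intro i j h
  exact hp i j (by simpa [bcf] using h)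

lemma WB.sum {w0 w1 H : ℤ} {ι : Type*} (s : Finset ι) (p : ι → ℂ[X][X])
    (hp : ∀ i ∈ s, WB w0 w1 H (p i)) : WB w0 w1 H (∑ i ∈ s, p i) := by
  classical
  induction s using Finset.induction_on with
  | empty => simpa using WB.zero _ _ _
  | insert a s ha ih =>
    rw [Finset.sum_insert ha]
    exact (hp a (by simp)).add (ih fun i hi => hp i (by simp [hi]))

lemma WB.mul {w0 w1 H H' : ℤ} {p q : ℂ[X][X]} (hp : WB w0 w1 H p) (hq : WB w0 w1 H' q) :
    WB w0 w1 (H + H') (p * q) := by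
  intro i j h
  simp only [bcf, coeff_mul, finsetSum_coeff] at h
  obtain ⟨x, hx, h⟩ := Finset.exists_ne_zero_of_sum_ne_zero h
  obtain ⟨y, hy, h⟩ := Finset.exists_ne_zero_of_sum_ne_zero h
  have h1 := hp y.1 x.1 (left_ne_zero_of_mul h)
  have h2 := hq y.2 x.2 (right_ne_zero_of_mul h)
  rw [Finset.HasAntidiagonal.mem_antidiagonal] at hx hy
  subst hx hy
  push_cast
  linarith

lemma WB.one (w0 w1 : ℤ) : WB w0 w1 0 1 := by
  intro i j h
  rw [bcf, coeff_one] at h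
  split_ifs at h with h1
  · rw [coeff_one] at h
    split_ifs at h with h2
    · simp [h1, h2]
    · simp at h
  · simp at h

lemma WB.prod {w0 w1 : ℤ} {ι : Type*} (s : Finset ι) (p : ι → ℂ[X][X]) (H : ι → ℤ)
    (hp : ∀ i ∈ s, WB w0 w1 (H i) (p i)) : WB w0 w1 (∑ i ∈ s, H i) (∏ i ∈ s, p i) := by
  classical
  induction s using Finset.induction_on with
  | empty => simpa using WB.one _ _
  | insert a s ha ih =>
    rw [Finset.sum_insert ha, Finset.prod_insert ha]
    exact (hp a (by simp)).mul (ih fun i hi => hp i (by simp [hi]))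

lemma WB.det {w0 w1 : ℤ} {N : ℕ} (M : Matrix (Fin N) (Fin N) ℂ[X][X]) (c r : Fin N → ℤ)
    (h : ∀ i j, WB w0 w1 (c i - r j) (M i j)) :
    WB w0 w1 (∑ i, c i - ∑ j, r j) M.det := by
  rw [Matrix.det_apply]
  refine WB.sum _ _ fun σ _ => ?_
  have h1 : WB w0 w1 (∑ i, c i - ∑ j, r j) (∏ i, M (σ i) i) := by
    have := WB.prod Finset.univ (fun i => M (σ i) i) (fun i => c (σ i) - r i)
      (fun i _ => h (σ i) i)
    rwa [Finset.sum_sub_distrib, Equiv.sum_comp σ c] at this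
  rcases Int.units_eq_one_or (Equiv.Perm.sign σ) with h2 | h2
  · rw [h2, one_smul]; exact h1
  · rw [h2, Units.neg_smul, one_smul]; exact h1.neg

/-- embedding of the constants -/
noncomputable abbrev CCm (A : Type*) [CommRing A] : A →+* A[X][X] := (C : A[X] →+* A[X][X]).comp C

/-- The resultant of `x q0 - p0` and `y q1 - p1`. -/
noncomputable def Rz {A : Type*} [CommRing A] (p0 q0 p1 q1 : A[X]) (n m : ℕ) : A[X][X] :=
  resultant (C (C X) * q0.map (CCm A) - p0.map (CCm A)) (C X * q1.map (CCm A) - p1.map (CCm A)) n m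

lemma WB.entry0 {w0 w1 : ℤ} (hw0 : 0 ≤ w0) (p q : ℂ[X]) (e : ℕ) :
    WB w0 w1 w0 ((C (C X) * q.map (CCm ℂ) - p.map (CCm ℂ)).coeff e) ∧
    (q.coeff e = 0 → WB w0 w1 0 ((C (C X) * q.map (CCm ℂ) - p.map (CCm ℂ)).coeff e)) := by
  have key : ∀ i j, bcf ((C (C X) * q.map (CCm ℂ) - p.map (CCm ℂ)).coeff e) i j ≠ 0 →
     (j = 0 ∧ i = 0) ∨ (j = 0 ∧ i = 1 ∧ q.coeff e ≠ 0) := by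
    intro i j h
    have e1 : (C (C X) * q.map (CCm ℂ) - p.map (CCm ℂ)).coeff e =
        C (X * C (q.coeff e) - C (p.coeff e)) := by
      simp
      exact mul_comm _ _
    rw [e1, bcf, coeff_C] at h
    split_ifs at h with h1
    · rcases i with _ | _ | i
      · exact Or.inl ⟨h1, rfl⟩
      · refine Or.inr ⟨h1, rfl, ?_⟩
        simpa [coeff_X_mul, coeff_C] using h
      · simp at h
    · simp at h
  constructor
  · intro i j h
    rcases key i j h with ⟨rfl, rfl⟩ | ⟨rfl, rfl, -⟩ <;> simp [hw0]
  · intro h0 i j h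
    rcases key i j h with ⟨rfl, rfl⟩ | ⟨rfl, rfl, h'⟩
    · simp
    · exact absurd h0 h'

lemma WB.entry1 {w0 w1 : ℤ} (hw1 : 0 ≤ w1) (p q : ℂ[X]) (e : ℕ) :
    WB w0 w1 w1 ((C X * q.map (CCm ℂ) - p.map (CCm ℂ)).coeff e) ∧
    (q.coeff e = 0 → WB w0 w1 0 ((C X * q.map (CCm ℂ) - p.map (CCm ℂ)).coeff e)) := by
  have key : ∀ i j, bcf ((C X * q.map (CCm ℂ) - p.map (CCm ℂ)).coeff e) i j ≠ 0 →
     (j = 0 ∧ i = 0) ∨ (j = 1 ∧ i = 0 ∧ q.coeff e ≠ 0) := by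
    intro i j h
    have e1 : (C X * q.map (CCm ℂ) - p.map (CCm ℂ)).coeff e =
        X * C (C (q.coeff e)) - C (C (p.coeff e)) := by
      simp
    rw [e1, bcf] at h
    rcases j with _ | _ | j
    · refine Or.inl ⟨rfl, ?_⟩
      by_contra hi
      simp [coeff_C, hi] at h
    · right
      simp only [zero_add, coeff_sub, coeff_X_mul, coeff_C_zero, coeff_C_succ, sub_zero] at h
      rw [coeff_C] at h
      split_ifs at h with hi
      · exact ⟨rfl, hi, h⟩
      · simp at h
    · simp at h
  constructor
  · intro i j h
    rcases key i j h with ⟨rfl, rfl⟩ | ⟨rfl, rfl, -⟩ <;> simp [hw1]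
  · intro h0 i j h
    rcases key i j h with ⟨rfl, rfl⟩ | ⟨rfl, rfl, h'⟩
    · simp
    · exact absurd h0 h'

/-- weights used at one of the two ends (`t = 0` or `t = ∞`) -/
structure Side (w0 w1 : ℤ) (L0 L1 n m : ℕ) (loss : ℤ) (ac ar as : ℕ → ℤ) : Prop where
  f1 : ∀ e i, ac (e + i) ≤ ar i + w0
  f2 : ∀ e i, L0 ≤ e → ac (e + i) ≤ ar i
  g1 : ∀ e i, ac (e + i) ≤ as i + w1
  g2 : ∀ e i, L1 ≤ e → ac (e + i) ≤ as i
  hl : loss + ∑ i ∈ Finset.range m, ar i + ∑ i ∈ Finset.range n, as i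
    ≤ ∑ k ∈ Finset.range (n + m), ac k

lemma Side.triv {w0 w1 : ℤ} (h0 : 0 ≤ w0) (h1 : 0 ≤ w1) (L0 L1 n m : ℕ) :
    Side w0 w1 L0 L1 n m 0 (fun _ => 0) (fun _ => 0) (fun _ => 0) := by
  constructor <;> simp [h0, h1]

lemma Side.left {w0 w1 : ℤ} (h1 : 0 ≤ w1) (a : ℤ) (ha : 0 ≤ a) (L0 L1 n m : ℕ)
    (e0 : w0 = a * L0) (e1 : w1 ≤ a * L1) (hn : L0 ≤ n) :
    Side w0 w1 L0 L1 n m (w1 * L0) (fun k => max 0 (w0 + w1 - a * k))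
      (fun k => max 0 (w1 - a * k)) (fun k => max 0 (w0 - a * k)) := by
  have hw0 : 0 ≤ w0 := by rw [e0]; positivity
  constructor
  · intro e i
    have : 0 ≤ a * (e : ℤ) := by positivity
    push_cast
    rw [mul_add]
    omega
  · intro e i he
    have : a * (L0 : ℤ) ≤ a * e := by gcongr
    push_cast
    rw [mul_add]
    omega
  · intro e i
    have : 0 ≤ a * (e : ℤ) := by positivity
    push_cast
    rw [mul_add]
    omega
  · intro e i he
    have : a * (L1 : ℤ) ≤ a * e := by gcongr
    push_cast
    rw [mul_add]
    omega
  · obtain ⟨d, rfl⟩ := Nat.exists_eq_add_of_le hn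
    rw [show L0 + d + m = L0 + (m + d) by ring, Finset.sum_range_add, Finset.sum_range_add,
      Finset.sum_range_add]
    have s1 : ∀ k ∈ Finset.range L0, max 0 (w0 + w1 - a * (k : ℤ)) = w1 + max 0 (w0 - a * k) := by
      intro k hk
      have : a * (k : ℤ) ≤ a * L0 := by
        have := Finset.mem_range.1 hk
        gcongr
      omega
    rw [Finset.sum_congr rfl s1, Finset.sum_add_distrib]
    have s2 : ∑ k ∈ Finset.range d, max 0 (w0 - a * ((L0 + k : ℕ) : ℤ)) = 0 := by
      refine Finset.sum_eq_zero fun k _ => ?_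
      have : 0 ≤ a * (k : ℤ) := by positivity
      push_cast
      rw [mul_add]
      omega
    have s3 : ∑ k ∈ Finset.range m, max 0 (w0 + w1 - a * ((L0 + k : ℕ) : ℤ)) =
        ∑ k ∈ Finset.range m, max 0 (w1 - a * (k : ℤ)) := by
      refine Finset.sum_congr rfl fun k _ => ?_
      push_cast
      rw [mul_add]
      congr 1
      omega
    have s4 : 0 ≤ ∑ k ∈ Finset.range d, max 0 (w0 + w1 - a * ((L0 + (m + k) : ℕ) : ℤ)) :=
      Finset.sum_nonneg fun k _ => le_max_left _ _
    rw [s2, s3]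
    simp only [Finset.sum_const, Finset.card_range, nsmul_eq_mul]
    linarith [mul_comm w1 (L0 : ℤ)]

lemma Side.swap {w0 w1 : ℤ} {L0 L1 n m : ℕ} {loss : ℤ} {ac ar as : ℕ → ℤ}
    (h : Side w0 w1 L0 L1 n m loss ac ar as) : Side w1 w0 L1 L0 m n loss ac as ar := by
  refine ⟨h.g1, h.g2, h.f1, h.f2, ?_⟩
  have := h.hl
  rw [add_comm m n]
  linarith

lemma Side.right {w0 w1 : ℤ} (h0 : 0 ≤ w0) (a : ℤ) (ha : 0 ≤ a) (L0 L1 n m : ℕ)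
    (e1 : w1 = a * L1) (e0 : w0 ≤ a * L0) (hm : L1 ≤ m) :
    Side w0 w1 L0 L1 n m (w0 * L1) (fun k => max 0 (w1 + w0 - a * k))
      (fun k => max 0 (w1 - a * k)) (fun k => max 0 (w0 - a * k)) :=
  (Side.left h0 a ha L1 L0 m n e1 e0 hm).swap

theorem WB.Rz {w0 w1 : ℤ} (hw0 : 0 ≤ w0) (hw1 : 0 ≤ w1) {L0 L1 M0 M1 n m : ℕ} {la lb : ℤ}
    {ac ar as bc br bs : ℕ → ℤ}
    (hA : Side w0 w1 L0 L1 n m la ac ar as) (hB : Side w0 w1 M0 M1 n m lb bc br bs)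
    (p0 q0 p1 q1 : ℂ[X]) (h0 : L0 + M0 ≤ n) (h1 : L1 + M1 ≤ m)
    (hq0 : ∀ k, q0.coeff k ≠ 0 → L0 ≤ k ∧ k + M0 ≤ n)
    (hq1 : ∀ k, q1.coeff k ≠ 0 → L1 ≤ k ∧ k + M1 ≤ m) :
    WB w0 w1 (m * w0 + n * w1 - la - lb) (Rz p0 q0 p1 q1 n m) := by
  unfold _root_.Rz resultant
  have main := WB.det (w0 := w0) (w1 := w1) (sylvester (C (C X) * q0.map (CCm ℂ) - p0.map (CCm ℂ))
      (C X * q1.map (CCm ℂ) - p1.map (CCm ℂ)) n m)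
      (fun k => w0 + w1 - ac k - bc (n + m - 1 - k))
      (fun j => j.addCases (fun j : Fin n => w0 - as j - bs (n - 1 - j))
        (fun j : Fin m => w1 - ar j - br (m - 1 - j))) ?_
  · refine main.mono ?_
    rw [Fin.sum_univ_eq_sum_range (fun k => w0 + w1 - ac k - bc (n + m - 1 - k)),
      Fin.sum_univ_add]
    simp only [Fin.addCases_left, Fin.addCases_right]
    rw [
      Fin.sum_univ_eq_sum_range (fun k => w0 - as k - bs (n - 1 - k)),
      Fin.sum_univ_eq_sum_range (fun k => w1 - ar k - br (m - 1 - k))]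
    simp only [Finset.sum_sub_distrib]
    rw [Finset.sum_range_reflect bc, Finset.sum_range_reflect bs, Finset.sum_range_reflect br]
    have e1 := hA.hl
    have e2 := hB.hl
    simp only [Finset.sum_const, Finset.card_range, nsmul_eq_mul]
    push_cast
    linarith
  · intro i j
    induction j using Fin.addCases with
    | left j =>
      simp only [sylvester, Matrix.of_apply, Fin.addCases_left]
      split_ifs with h
      · obtain ⟨e, he⟩ := Nat.exists_eq_add_of_le h.1
        have he' : (i : ℕ) - j = e := by omega
        obtain ⟨e2, he2⟩ := Nat.exists_eq_add_of_le h.2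
        have hi := i.2
        have hj := j.2
        have hr : n + m - 1 - (i : ℕ) = e2 + (n - 1 - j) := by omega
        have hee : e + e2 = m := by omega
        rw [he', hr, show (i : ℕ) = e + j by omega]
        obtain ⟨t1, t2⟩ := WB.entry1 (w0 := w0) hw1 p1 q1 e
        by_cases hq : q1.coeff e = 0
        · refine (t2 hq).mono ?_
          have a1 := hA.g1 e j
          have b1 := hB.g1 e2 (n - 1 - j)
          by_cases hL : L1 ≤ e
          · have a2 := hA.g2 e j hL
            linarith
          · have b2 := hB.g2 e2 (n - 1 - j) (by omega)
            linarith
        · refine t1.mono ?_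
          have a2 := hA.g2 e j (hq1 e hq).1
          have b2 := hB.g2 e2 (n - 1 - j) (by have := (hq1 e hq).2; omega)
          linarith
      · exact WB.zero _ _ _
    | right j =>
      simp only [sylvester, Matrix.of_apply, Fin.addCases_right]
      split_ifs with h
      · obtain ⟨e, he⟩ := Nat.exists_eq_add_of_le h.1
        have he' : (i : ℕ) - j = e := by omega
        obtain ⟨e2, he2⟩ := Nat.exists_eq_add_of_le h.2
        have hi := i.2
        have hj := j.2
        have hr : n + m - 1 - (i : ℕ) = e2 + (m - 1 - j) := by omega
        have hee : e + e2 = n := by omega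
        rw [he', hr, show (i : ℕ) = e + j by omega]
        obtain ⟨t1, t2⟩ := WB.entry0 (w1 := w1) hw0 p0 q0 e
        by_cases hq : q0.coeff e = 0
        · refine (t2 hq).mono ?_
          have a1 := hA.f1 e j
          have b1 := hB.f1 e2 (m - 1 - j)
          by_cases hL : L0 ≤ e
          · have a2 := hA.f2 e j hL
            linarith
          · have b2 := hB.f2 e2 (m - 1 - j) (by omega)
            linarith
        · refine t1.mono ?_
          have a2 := hA.f2 e j (hq0 e hq).1
          have b2 := hB.f2 e2 (m - 1 - j) (by have := (hq0 e hq).2; omega)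
          linarith
      · exact WB.zero _ _ _

lemma resultant_multiset {S : Type*} [CommRing S] [Nontrivial S] (s : Multiset S) (f : S[X]) (n : ℕ)
    (hf : f.natDegree ≤ n) :
    ((s.map (fun a => X - C a)).prod).resultant f s.card n = (s.map (fun a => f.eval a)).prod := by
  induction s using Multiset.induction_on with
  | empty => simp
  | cons a s ih =>
    have h := resultant_mul_left (X - C a) ((s.map (fun a => X - C a)).prod) f n hf
    rw [natDegree_X_sub_C, natDegree_multiset_prod_X_sub_C_eq_card, ih,
      resultant_X_sub_C_left _ _ _ hf] at h
    rw [Multiset.map_cons, Multiset.prod_cons, Multiset.map_cons, Multiset.prod_cons,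
      Multiset.card_cons, add_comm s.card 1, h]

lemma eval_f0 (p0 q0 : ℂ[X]) (b : ℂ) :
    (C X * q0.map C - p0.map C : ℂ[X][X]).eval (C b) = X * C (q0.eval b) - C (p0.eval b) := by
  simp [eval_map, eval₂_at_apply]

lemma lin_ne (a b : ℂ) (h : a ≠ 0) : (X * C a - C b : ℂ[X]) ≠ 0 ∧ (X * C a - C b : ℂ[X]).natDegree = 1 := by
  have : (X * C a - C b : ℂ[X]).natDegree = 1 := by
    rw [mul_comm, sub_eq_add_neg, ← C_neg]; exact natDegree_linear h
  refine ⟨?_, this⟩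
  intro h; rw [h] at this; simp at this

lemma sub_of_zero {R : Type*} [CommRing R] (a b : R) (hb : b = 0) : a - b = a := by
  rw [hb, sub_zero]

lemma Rz_zero {A : Type*} [CommRing A] (p0 q0 q1 : A[X]) (n m : ℕ) :
    Rz p0 q0 0 q1 n m =
      X ^ n * C (resultant (C X * q0.map C - p0.map C) (q1.map C) n m) := by
  have e : Rz p0 q0 0 q1 n m = resultant (C (C X) * q0.map (CCm A) - p0.map (CCm A))
      (C X * q1.map (CCm A)) n m := by
    unfold Rz; congr 1; exact sub_of_zero _ _ (Polynomial.map_zero _)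
  rw [e, resultant_C_mul_right, ← resultant_map_map]
  congr 2
  · rw [Polynomial.map_sub, Polynomial.map_mul, Polynomial.map_map, Polynomial.map_map, map_C]
  · rw [Polynomial.map_map]

lemma V1 (p0 u : ℂ[X]) (n m r L1 M1 : ℕ) (hp0 : p0.natDegree ≤ n) (hr : r ≤ n) (hu : u.Monic)
    (u0 : u.coeff 0 ≠ 0) (hm : L1 + u.natDegree + M1 = m)
    (h0 : r = 0 ∨ p0.coeff 0 ≠ 0) (hn : r = n ∨ p0.coeff n ≠ 0) :
    bcf (Rz p0 (X ^ r) 0 (X ^ L1 * u) n m)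
      (u.natDegree + (if r = 0 then L1 else 0) + (if r = n then M1 else 0)) n ≠ 0 := by
  set f : ℂ[X][X] := C X * (X ^ r : ℂ[X]).map C - p0.map C with hf
  have hfd : f.natDegree ≤ n := by
    refine (natDegree_sub_le _ _).trans (max_le ?_ (natDegree_map_le.trans hp0))
    refine (natDegree_C_mul_le _ _).trans (natDegree_map_le.trans ?_)
    simpa using hr
  have e1 : Rz p0 (X ^ r) 0 (X ^ L1 * u) n m =
      X ^ n * C (resultant f ((X ^ L1 * u).map C) n m) := Rz_zero _ _ _ _ _
  rw [e1, bcf, mul_comm, coeff_C_mul, coeff_X_pow_self, mul_one]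
  have hsplit : (u.map C : ℂ[X][X]) = ((u.roots.map C).map (fun a => X - C a)).prod := by
    conv_lhs => rw [(IsAlgClosed.splits u).eq_prod_roots_of_monic hu]
    rw [Polynomial.map_multiset_prod]
    simp
  have hcard : u.roots.card = u.natDegree := (IsAlgClosed.card_roots_eq_natDegree)
  have hfull : ((X ^ L1 * u).map C : ℂ[X][X]) =
      (((Multiset.replicate L1 (0 : ℂ[X])) + (u.roots.map C)).map (fun a => X - C a)).prod := by
    rw [Multiset.map_add, Multiset.prod_add, ← hsplit]; simp
  have hc : ((Multiset.replicate L1 (0 : ℂ[X])) + (u.roots.map C)).card = L1 + u.natDegree := by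
    simp [hcard]
  have hR := resultant_multiset ((Multiset.replicate L1 (0 : ℂ[X])) + (u.roots.map C)) f n hfd
  rw [← hfull, hc] at hR
  rw [← hm, resultant_comm, resultant_add_left_deg _ _ _ _ _ _, hR]
  swap
  · refine natDegree_map_le.trans (natDegree_mul_le.trans ?_); simp
  have hcn : f.coeff n = X * C (if r = n then 1 else 0) - C (p0.coeff n) := by
    rw [hf]; simp [coeff_X_pow, eq_comm]
  have key1 : f.coeff n ≠ 0 ∧ (f.coeff n).natDegree = if r = n then 1 else 0 := by
    rw [hcn]
    split_ifs with h
    · exact lin_ne _ _ one_ne_zero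
    · have := hn.resolve_left h
      simp only [C_0, mul_zero, zero_sub, natDegree_neg, natDegree_C, and_true]
      simpa using this
  have hc0 : f.eval 0 = X * C (if r = 0 then 1 else 0) - C (p0.coeff 0) := by
    have := eval_f0 p0 (X ^ r) 0
    rw [C_0] at this
    rw [hf, this]; simp [coeff_zero_eq_eval_zero, zero_pow_eq]
  have key0 : f.eval 0 ≠ 0 ∧ (f.eval 0).natDegree = if r = 0 then 1 else 0 := by
    rw [hc0]
    split_ifs with h
    · exact lin_ne _ _ one_ne_zero
    · have := h0.resolve_left h
      simp only [C_0, mul_zero, zero_sub, natDegree_neg, natDegree_C, and_true]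
      simpa using this
  have keyr : ((u.roots.map C).map (fun a => f.eval a)).prod ≠ 0 ∧
      ((u.roots.map C).map (fun a => f.eval a)).prod.natDegree = u.natDegree := by
    have hb : ∀ b ∈ u.roots, f.eval (C b) ≠ 0 ∧ (f.eval (C b)).natDegree = 1 := by
      intro b hb
      rw [hf, eval_f0]
      apply lin_ne
      simp only [eval_pow, eval_X]
      apply pow_ne_zero
      rintro rfl
      apply u0
      rw [coeff_zero_eq_eval_zero]
      exact (mem_roots'.1 hb).2
    have hz : (0 : ℂ[X]) ∉ (u.roots.map C).map (fun a => f.eval a) := by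
      intro h
      simp only [Multiset.map_map, Multiset.mem_map] at h
      obtain ⟨b, hb1, hb2⟩ := h
      exact (hb b hb1).1 hb2
    refine ⟨fun h => hz (Multiset.prod_eq_zero_iff.1 h), ?_⟩
    rw [natDegree_multiset_prod _ hz, Multiset.map_map, Multiset.map_map,
      Multiset.map_congr rfl (g := fun _ => 1)]
    · simp [hcard]
    · intro b hbb; exact (hb b hbb).2
  rw [Multiset.map_add, Multiset.prod_add, Multiset.map_replicate, Multiset.prod_replicate]
  set T : ℂ[X] := (f.coeff n ^ M1) * (f.eval 0 ^ L1 *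
    ((u.roots.map C).map (fun a => f.eval a)).prod) with hT
  have hT0 : T ≠ 0 := mul_ne_zero (pow_ne_zero _ key1.1) (mul_ne_zero (pow_ne_zero _ key0.1) keyr.1)
  have hTd : T.natDegree = (u.natDegree + (if r = 0 then L1 else 0) + (if r = n then M1 else 0)) := by
    rw [hT, natDegree_mul (pow_ne_zero _ key1.1) (mul_ne_zero (pow_ne_zero _ key0.1) keyr.1),
      natDegree_mul (pow_ne_zero _ key0.1) keyr.1, natDegree_pow, natDegree_pow, key1.2, key0.2, keyr.2]
    split_ifs <;> ring
  rw [← hTd]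
  have hs : ∀ a b : ℕ, (((-1) ^ a * ((-1) ^ b * f.coeff n ^ M1 * (f.eval 0 ^ L1 *
    ((u.roots.map C).map (fun a => f.eval a)).prod)) : ℂ[X])) = C ((-1) ^ a * (-1) ^ b) * T := by
    intro a b; rw [hT]; simp; ring
  rw [hs, coeff_C_mul]
  refine mul_ne_zero (by simp) ?_
  exact leadingCoeff_ne_zero.2 hT0

lemma coeff_prod_natDegree {S : Type*} [CommRing S] {ι : Type*} (s : Finset ι) (f : ι → S[X]) (d : ι → ℕ)
    (h : ∀ i ∈ s, (f i).natDegree ≤ d i) :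
    (∏ i ∈ s, f i).natDegree ≤ ∑ i ∈ s, d i ∧
    (∏ i ∈ s, f i).coeff (∑ i ∈ s, d i) = ∏ i ∈ s, (f i).coeff (d i) := by
  classical
  induction s using Finset.induction_on with
  | empty => simp
  | insert a s ha ih =>
    rw [Finset.prod_insert ha, Finset.sum_insert ha, Finset.prod_insert ha]
    obtain ⟨h1, h2⟩ := ih (fun i hi => h i (Finset.mem_insert_of_mem hi))
    have h3 := h a (Finset.mem_insert_self _ _)
    refine ⟨natDegree_mul_le.trans (add_le_add h3 h1), ?_⟩
    rw [coeff_mul_add_eq_of_natDegree_le h3 h1, h2]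

lemma coeff_det_col {S : Type*} [CommRing S] {N : ℕ} (M : Matrix (Fin N) (Fin N) S[X]) (d : Fin N → ℕ)
    (h : ∀ i j, (M i j).natDegree ≤ d j) :
    M.det.coeff (∑ j, d j) = (Matrix.of fun i j => (M i j).coeff (d j)).det := by
  rw [Matrix.det_apply, Matrix.det_apply, finsetSum_coeff]
  refine Finset.sum_congr rfl fun σ _ => ?_
  have := (coeff_prod_natDegree Finset.univ (fun i => M (σ i) i) d (fun i _ => h _ _)).2
  rcases Int.units_eq_one_or (Equiv.Perm.sign σ) with h2 | h2 <;> rw [h2] <;> simp [this]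

lemma coeff_res {S : Type*} [CommRing S] (h A B : S[X]) (e m : ℕ) :
    (resultant (h.map C) (C X * A.map C - B.map C : S[X][X]) e m).coeff e = resultant h A e m := by
  have := coeff_det_col (sylvester (h.map C) (C X * A.map C - B.map C : S[X][X]) e m)
    (Fin.addCases (fun _ => 1) (fun _ => 0)) (by
      intro i j
      induction j using Fin.addCases with
      | left j =>
        simp only [sylvester, Matrix.of_apply, Fin.addCases_left]
        split_ifs
        · simp only [coeff_sub, coeff_C_mul, coeff_map]
          compute_degree
        · simp
      | right j =>
        simp only [sylvester, Matrix.of_apply, Fin.addCases_right]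
        split_ifs <;> simp)
  rw [Fin.sum_univ_add] at this
  simp only [Fin.addCases_left, Fin.addCases_right, Finset.sum_const, Finset.card_univ,
    Fintype.card_fin, smul_eq_mul, mul_one, mul_zero, add_zero] at this
  rw [resultant, this, resultant]
  congr 1
  ext i j
  induction j using Fin.addCases with
  | left j =>
    simp only [sylvester, Matrix.of_apply, Fin.addCases_left]
    split_ifs
    · simp [coeff_C]
    · simp
  | right j =>
    simp only [sylvester, Matrix.of_apply, Fin.addCases_right]
    split_ifs <;> simp

lemma V2a {S : Type*} [CommRing S] [Nontrivial S] (x : S) (n m L0 e R1 M1 : ℕ) (hn : L0 + e = n)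
    (hm : R1 + M1 = m) (he : 0 < e) (hR : 0 < R1) :
    (resultant ((X ^ L0 * (X ^ e + C x)).map C) (C X * (X ^ R1 : S[X]).map C - (-1 : S[X]).map C : S[X][X])
      n m).coeff e = (-1) ^ (e * R1) * x ^ R1 := by
  have hgd : (C X * (X ^ R1 : S[X]).map C - (-1 : S[X]).map C : S[X][X]).natDegree ≤ m := by
    refine (natDegree_sub_le _ _).trans (max_le ?_ (natDegree_map_le.trans (by simp)))
    refine (natDegree_C_mul_le _ _).trans (natDegree_map_le.trans ?_)
    simp; omega
  have hmon : ((X ^ e + C x : S[X]).map (C : S →+* S[X])).natDegree = e := by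
    rw [Polynomial.map_add, Polynomial.map_pow, map_X, map_C]
    exact natDegree_X_pow_add_C
  have h1 := resultant_mul_left (X ^ L0 : S[X][X]) ((X ^ e + C x : S[X]).map C) _ m hgd
  rw [hmon, natDegree_X_pow, hn, resultant_X_pow_left _ _ _ hgd] at h1
  rw [Polynomial.map_mul, Polynomial.map_pow, map_X, h1]
  have h0 : (C X * (X ^ R1 : S[X]).map C - (-1 : S[X]).map C : S[X][X]).coeff 0 = 1 := by
    simp [coeff_X_pow, hR.ne]
  rw [h0, one_pow, one_mul, coeff_res, ← hm, resultant_add_right_deg _ _ _ _ _ (by simp),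
    resultant_X_pow_right _ _ _ (by rw [natDegree_X_pow_add_C])]
  simp [coeff_X_pow, he.ne, coeff_C, he.ne']

lemma V2b {A : Type*} [CommRing A] (n m L0 e R1 : ℕ) (hn : L0 + e = n) :
    Rz (-X ^ n) (X ^ L0) (-1) (X ^ R1) n m =
     resultant ((X ^ L0 * (X ^ e + C X)).map C)
       (C X * (X ^ R1 : A[X][X]).map C - (-1 : A[X][X]).map C) n m := by
  unfold Rz
  refine congrArg₂ (fun f g => resultant f g n m) ?_ ?_
  · rw [Polynomial.map_neg, Polynomial.map_mul, Polynomial.map_add, Polynomial.map_pow,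
      Polynomial.map_pow, Polynomial.map_pow, Polynomial.map_pow, map_X, map_X, map_C, ← hn, pow_add]
    ring
  · rw [Polynomial.map_neg, Polynomial.map_pow, Polynomial.map_one, Polynomial.map_neg,
      Polynomial.map_pow, Polynomial.map_one, map_X, map_X]

lemma V2 (n m L0 e R1 M1 : ℕ) (hn : L0 + e = n) (hm : R1 + M1 = m) (he : 0 < e) (hR : 0 < R1) :
    bcf (Rz (-X ^ n) (X ^ L0) (-1) (X ^ R1) n m : ℂ[X][X]) R1 e ≠ 0 := by
  rw [V2b n m L0 e R1 hn, bcf, V2a _ n m L0 e R1 M1 hn hm he hR]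
  have : ((-1) ^ (e * R1) * X ^ R1 : ℂ[X]) = C ((-1) ^ (e * R1)) * X ^ R1 := by simp
  rw [this, coeff_C_mul]
  simp

lemma Rz_swap {A : Type*} [CommRing A] (p0 q0 p1 q1 : A[X]) (n m i j : ℕ) :
    bcf (Rz p0 q0 p1 q1 n m) i j = (-1) ^ (n * m) * bcf (Rz p1 q1 p0 q0 m n) j i := by
  have hc : ∀ p : A[X][X], ∀ i j, bcf (Bivariate.swap (R := A) p) i j = bcf p j i := by
    intro p i j
    induction p using Polynomial.induction_on' with
    | add p q hp hq =>
      unfold bcf at *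
      rw [map_add, coeff_add, coeff_add, coeff_add, coeff_add, hp, hq]
    | monomial k p =>
      induction p using Polynomial.induction_on' with
      | add p q hp hq =>
        unfold bcf at *
        rw [map_add, map_add, coeff_add, coeff_add, coeff_add, coeff_add, hp, hq]
      | monomial l a =>
        unfold bcf
        rw [Bivariate.swap_monomial_monomial, coeff_monomial, coeff_monomial]
        split_ifs <;> simp [coeff_monomial, *]
  have hs : ∀ p : A[X], (p.map (CCm A)).map (Bivariate.swap (R := A) : A[X][X] →+* A[X][X]) = p.map (CCm A) := by
    intro p
    rw [Polynomial.map_map]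
    congr 1
    ext1 a
    exact Bivariate.swap_C_C a
  have h : Rz p0 q0 p1 q1 n m = (-1) ^ (n * m) * Bivariate.swap (R := A) (Rz p1 q1 p0 q0 m n) := by
    have := resultant_map_map (f := (C (C X) * q1.map (CCm A) - p1.map (CCm A))) (g := (C X * q0.map (CCm A) - p0.map (CCm A))) m n
      (φ := (Bivariate.swap (R := A) : A[X][X] →+* A[X][X]))
    rw [Polynomial.map_sub, Polynomial.map_sub, Polynomial.map_mul, Polynomial.map_mul, hs, hs, hs, hs,
      map_C, map_C] at this
    have e1 : (Bivariate.swap (R := A) : A[X][X] →+* A[X][X]) (C X) = X := Bivariate.swap_X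
    have e2 : (Bivariate.swap (R := A) : A[X][X] →+* A[X][X]) X = C X := Bivariate.swap_Y
    rw [e1, e2] at this
    unfold Rz
    rw [resultant_comm]
    congr 1
  rw [h]
  have : (-1 : A[X][X]) ^ (n * m) = C (C ((-1) ^ (n * m))) := by simp
  rw [this, bcf, coeff_C_mul, coeff_C_mul, ← hc]
  rfl

/-- the index type of the coefficients -/
abbrev Ix (SS : Fin 4 → Finset ℕ) := Σ i : Fin 4, {s // s ∈ SS i}

/-- generic validity -/
def Gen (SS : Fin 4 → Finset ℕ) (p : (Ix SS → ℂ) → Prop) : Prop :=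
  ∃ G : MvPolynomial (Ix SS) ℂ, G ≠ 0 ∧ ∀ c, MvPolynomial.eval c G ≠ 0 → p c

lemma Gen.and {SS : Fin 4 → Finset ℕ} {p q : (Ix SS → ℂ) → Prop} (hp : Gen SS p) (hq : Gen SS q) :
    Gen SS (fun c => p c ∧ q c) := by
  obtain ⟨G, hG, h1⟩ := hp
  obtain ⟨G', hG', h2⟩ := hq
  refine ⟨G * G', mul_ne_zero hG hG', fun c hc => ?_⟩
  rw [map_mul] at hc
  exact ⟨h1 c (left_ne_zero_of_mul hc), h2 c (right_ne_zero_of_mul hc)⟩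

lemma Gen.mono {SS : Fin 4 → Finset ℕ} {p q : (Ix SS → ℂ) → Prop} (hp : Gen SS p) (h : ∀ c, p c → q c) :
    Gen SS q := by
  obtain ⟨G, hG, h1⟩ := hp
  exact ⟨G, hG, fun c hc => h c (h1 c hc)⟩

lemma Gen.ball {SS : Fin 4 → Finset ℕ} {ι : Type*} (s : Finset ι) {p : ι → (Ix SS → ℂ) → Prop}
    (hp : ∀ i ∈ s, Gen SS (p i)) : Gen SS (fun c => ∀ i ∈ s, p i c) := by
  classical
  induction s using Finset.induction_on with
  | empty => exact ⟨1, one_ne_zero, by simp⟩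
  | insert a s ha ih =>
    refine ((hp a (Finset.mem_insert_self _ _)).and
      (ih fun i hi => hp i (Finset.mem_insert_of_mem hi))).mono ?_
    rintro c ⟨h1, h2⟩ i hi
    rcases Finset.mem_insert.1 hi with rfl | hi
    exacts [h1, h2 i hi]

lemma Gen.exists {SS : Fin 4 → Finset ℕ} {p : (Ix SS → ℂ) → Prop} (hp : Gen SS p) : ∃ c, p c := by
  obtain ⟨G, hG, h1⟩ := hp
  by_contra hcon
  push Not at hcon
  apply hG
  apply MvPolynomial.funext
  intro c
  rw [map_zero]
  by_contra h
  exact hcon c (h1 c h)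

lemma Gen.of_poly {SS : Fin 4 → Finset ℕ} (G : MvPolynomial (Ix SS) ℂ)
    (h : ∃ c, MvPolynomial.eval c G ≠ 0) : Gen SS (fun c => MvPolynomial.eval c G ≠ 0) := by
  obtain ⟨c, hc⟩ := h
  exact ⟨G, by rintro rfl; simp at hc, fun _ h => h⟩

/-- the polynomials with given coefficients -/
noncomputable def pl (SS : Fin 4 → Finset ℕ) (c : Ix SS → ℂ) (i : Fin 4) : ℂ[X] :=
  polyOfCoeffs (SS i) (fun s => c ⟨i, s⟩)

/-- the universal polynomials -/
noncomputable def plU (SS : Fin 4 → Finset ℕ) (i : Fin 4) : (MvPolynomial (Ix SS) ℂ)[X] :=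
  ∑ s ∈ (SS i).attach, C (MvPolynomial.X ⟨i, s⟩) * X ^ (s : ℕ)

lemma plU_map (SS : Fin 4 → Finset ℕ) (c : Ix SS → ℂ) (i : Fin 4) :
    (plU SS i).map (MvPolynomial.eval c) = pl SS c i := by
  simp [plU, pl, polyOfCoeffs, Polynomial.map_sum]

lemma pl_coeff (SS : Fin 4 → Finset ℕ) (c : Ix SS → ℂ) (i : Fin 4) (k : ℕ) :
    (pl SS c i).coeff k = if h : k ∈ SS i then c ⟨i, ⟨k, h⟩⟩ else 0 := by
  rw [pl, polyOfCoeffs, finsetSum_coeff]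
  simp only [coeff_C_mul, coeff_X_pow, mul_ite, mul_one, mul_zero]
  split_ifs with h
  · rw [Finset.sum_eq_single ⟨k, h⟩]
    · simp
    · rintro ⟨b, hb⟩ _ hne
      rw [if_neg]
      rintro rfl
      exact hne rfl
    · simp
  · apply Finset.sum_eq_zero
    rintro ⟨b, hb⟩ _
    rw [if_neg]
    rintro rfl
    exact h hb

lemma pl_supp {SS : Fin 4 → Finset ℕ} {c : Ix SS → ℂ} {i : Fin 4} {k : ℕ}
    (h : (pl SS c i).coeff k ≠ 0) : k ∈ SS i := by
  rw [pl_coeff] at h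
  by_contra hk
  simp [hk] at h

lemma pl_natDegree {SS : Fin 4 → Finset ℕ} {c : Ix SS → ℂ} {i : Fin 4} {n : ℕ}
    (h : ∀ s ∈ SS i, s ≤ n) : (pl SS c i).natDegree ≤ n := by
  rw [natDegree_le_iff_coeff_eq_zero]
  intro k hk
  by_contra h1
  exact absurd (h k (pl_supp h1)) (by omega)

lemma exists_pl4 (SS : Fin 4 → Finset ℕ) {i0 i1 i2 i3 : Fin 4} (hd : [i0, i1, i2, i3].Nodup)
    (a b c d : ℂ[X]) (ha : ∀ k, a.coeff k ≠ 0 → k ∈ SS i0) (hb : ∀ k, b.coeff k ≠ 0 → k ∈ SS i1)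
    (hc : ∀ k, c.coeff k ≠ 0 → k ∈ SS i2) (hdd : ∀ k, d.coeff k ≠ 0 → k ∈ SS i3) :
    ∃ co : Ix SS → ℂ, pl SS co i0 = a ∧ pl SS co i1 = b ∧ pl SS co i2 = c ∧ pl SS co i3 = d := by
  refine ⟨fun x => (if x.1 = i0 then a else if x.1 = i1 then b else if x.1 = i2 then c else d).coeff x.2, ?_⟩
  simp only [List.nodup_cons, List.mem_cons, List.not_mem_nil, not_or] at hd
  obtain ⟨⟨h1, h2, h3, -⟩, ⟨h4, h5, -⟩, ⟨h6, -⟩, -⟩ := hd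
  refine ⟨?_, ?_, ?_, ?_⟩
  · ext k
    rw [pl_coeff]
    by_cases h : k ∈ SS i0
    · simp [h]
    · simp only [h, dite_false]; by_contra h'; exact h (ha k (Ne.symm h'))
  · ext k
    rw [pl_coeff]
    by_cases h : k ∈ SS i1
    · simp [h, Ne.symm h1]
    · simp only [h, dite_false]; by_contra h'; exact h (hb k (Ne.symm h'))
  · ext k
    rw [pl_coeff]
    by_cases h : k ∈ SS i2
    · simp [h, Ne.symm h2, Ne.symm h4]
    · simp only [h, dite_false]; by_contra h'; exact h (hc k (Ne.symm h'))
  · ext k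
    rw [pl_coeff]
    by_cases h : k ∈ SS i3
    · simp [h, Ne.symm h3, Ne.symm h5, Ne.symm h6]
    · simp only [h, dite_false]; by_contra h'; exact h (hdd k (Ne.symm h'))

lemma Rz_map {A B : Type*} [CommRing A] [CommRing B] (φ : A →+* B) (p0 q0 p1 q1 : A[X]) (n m : ℕ) :
    Rz (p0.map φ) (q0.map φ) (p1.map φ) (q1.map φ) n m =
      (Rz p0 q0 p1 q1 n m).map (mapRingHom φ) := by
  have hs : ∀ p : A[X], (p.map (CCm A)).map (mapRingHom (mapRingHom φ)) = (p.map φ).map (CCm B) := by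
    intro p
    rw [Polynomial.map_map, Polynomial.map_map]
    congr 1
    ext1 a
    show (C (C a) : A[X][X]).map (mapRingHom φ) = C (C (φ a))
    rw [map_C, coe_mapRingHom, map_C]
  have := resultant_map_map (f := (C (C X) * q0.map (CCm A) - p0.map (CCm A)))
      (g := (C X * q1.map (CCm A) - p1.map (CCm A))) n m (φ := (mapRingHom (mapRingHom φ)))
  rw [Polynomial.map_sub, Polynomial.map_sub, Polynomial.map_mul, Polynomial.map_mul, hs, hs, hs, hs,
      map_C, map_C] at this
  have e1 : (mapRingHom (mapRingHom φ)) (C X : A[X][X]) = C X := by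
    rw [coe_mapRingHom, map_C, coe_mapRingHom, map_X]
  have e2 : (mapRingHom (mapRingHom φ)) (X : A[X][X]) = X := by
    rw [coe_mapRingHom, map_X]
  rw [e1, e2] at this
  exact this

lemma bcf_Rz_map {A B : Type*} [CommRing A] [CommRing B] (φ : A →+* B) (p0 q0 p1 q1 : A[X]) (n m i j : ℕ) :
    bcf (Rz (p0.map φ) (q0.map φ) (p1.map φ) (q1.map φ) n m) i j = φ (bcf (Rz p0 q0 p1 q1 n m) i j) := by
  rw [Rz_map, bcf, coeff_map, coe_mapRingHom, coeff_map]
  rfl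

lemma Gen_bcf (SS : Fin 4 → Finset ℕ) {i0 i1 i2 i3 : Fin 4} (hd : [i0, i1, i2, i3].Nodup) (n m i j : ℕ)
    (a b c d : ℂ[X]) (ha : ∀ k, a.coeff k ≠ 0 → k ∈ SS i0) (hb : ∀ k, b.coeff k ≠ 0 → k ∈ SS i1)
    (hc : ∀ k, c.coeff k ≠ 0 → k ∈ SS i2) (hdd : ∀ k, d.coeff k ≠ 0 → k ∈ SS i3)
    (hne : bcf (Rz a b c d n m) i j ≠ 0) :
    Gen SS (fun co => bcf (Rz (pl SS co i0) (pl SS co i1) (pl SS co i2) (pl SS co i3) n m) i j ≠ 0) := by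
  have key : ∀ co : Ix SS → ℂ,
      bcf (Rz (pl SS co i0) (pl SS co i1) (pl SS co i2) (pl SS co i3) n m) i j =
      MvPolynomial.eval co (bcf (Rz (plU SS i0) (plU SS i1) (plU SS i2) (plU SS i3) n m) i j) := by
    intro co
    rw [← bcf_Rz_map, plU_map, plU_map, plU_map, plU_map]
  simp only [key]
  apply Gen.of_poly
  obtain ⟨co, h0, h1, h2, h3⟩ := exists_pl4 SS hd a b c d ha hb hc hdd
  refine ⟨co, ?_⟩
  rw [← key, h0, h1, h2, h3]
  exact hne

/-- sum of monomials -/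
noncomputable def ones (S : Finset ℕ) : ℂ[X] := ∑ s ∈ S, X ^ s

lemma ones_coeff (S : Finset ℕ) (k : ℕ) : (ones S).coeff k = if k ∈ S then 1 else 0 := by
  rw [ones, finsetSum_coeff]
  simp [coeff_X_pow]

lemma ones_supp (S : Finset ℕ) (k : ℕ) (h : (ones S).coeff k ≠ 0) : k ∈ S := by
  rw [ones_coeff] at h
  by_contra h1
  simp [h1] at h

lemma X_pow_supp {S : Finset ℕ} {r : ℕ} (hr : r ∈ S) (k : ℕ) (h : (X ^ r : ℂ[X]).coeff k ≠ 0) : k ∈ S := by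
  rw [coeff_X_pow] at h
  by_contra h1
  apply h
  rw [if_neg]
  rintro rfl
  exact h1 hr

lemma ones_natDegree {S : Finset ℕ} {n : ℕ} (h : ∀ s ∈ S, s ≤ n) : (ones S).natDegree ≤ n := by
  rw [natDegree_le_iff_coeff_eq_zero]
  intro k hk
  by_contra h1
  exact absurd (h k (ones_supp _ _ h1)) (by omega)

lemma no_common_root {p q : ℂ[X]} {n m : ℕ} (hp : p.natDegree ≤ n) (hq : q.natDegree ≤ m) (hn : n ≠ 0)
    (h : resultant p q n m ≠ 0) (t : ℂ) (h1 : p.eval t = 0) (h2 : q.eval t = 0) : False := by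
  obtain ⟨a, b, -, -, hab⟩ := exists_mul_add_mul_eq_C_resultant p q hp hq (Or.inl hn)
  have := congrArg (eval t) hab
  simp [h1, h2] at this
  exact h this.symm

lemma Gen_A_aux (SS : Fin 4 → Finset ℕ) {i0 i1 i2 i3 : Fin 4} (hd : [i0, i1, i2, i3].Nodup) (n : ℕ)
    (hn : n ≠ 0) (hne : (SS i1).Nonempty) (h0 : 0 ∈ SS i0) (hm : n ∈ SS i0 ∪ SS i1)
    (hmax : ∀ s ∈ SS i0 ∪ SS i1, s ≤ n) :
    Gen SS (fun co => ∀ t, (pl SS co i0).eval t = 0 → (pl SS co i1).eval t = 0 → False) := by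
  have hm0 : ∀ s ∈ SS i0, s ≤ n := fun s hs => hmax s (Finset.mem_union_left _ hs)
  have hm1 : ∀ s ∈ SS i1, s ≤ n := fun s hs => hmax s (Finset.mem_union_right _ hs)
  have key : ∀ co : Ix SS → ℂ,
      resultant (pl SS co i0) (pl SS co i1) n n =
      MvPolynomial.eval co (resultant (plU SS i0) (plU SS i1) n n) := by
    intro co
    rw [← resultant_map_map, plU_map, plU_map]
  have : Gen SS (fun co => resultant (pl SS co i0) (pl SS co i1) n n ≠ 0) := by
    simp only [key]
    apply Gen.of_poly
    obtain ⟨r, hr, hr2⟩ : ∃ r ∈ SS i1, (n ∈ SS i1 → r = n) := by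
      by_cases h : n ∈ SS i1
      · exact ⟨n, h, fun _ => rfl⟩
      · obtain ⟨r, hr⟩ := hne
        exact ⟨r, hr, fun h' => absurd h' h⟩
    obtain ⟨co, h0', h1, -, -⟩ := exists_pl4 SS hd (ones (SS i0)) (X ^ r) 0 0 (ones_supp _)
      (X_pow_supp hr) (by simp) (by simp)
    refine ⟨co, ?_⟩
    rw [← key, h0', h1]
    obtain ⟨e, he⟩ := Nat.exists_eq_add_of_le (hm1 r hr)
    have : resultant (ones (SS i0)) (X ^ r) n n = resultant (ones (SS i0)) (X ^ r) n (r + e) := by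
      rw [← he]
    rw [this, resultant_add_right_deg _ _ _ _ _ (by simp),
      resultant_X_pow_right _ _ _ (ones_natDegree hm0)]
    rw [ones_coeff, ones_coeff, if_pos h0]
    split_ifs with h
    · simp
    · have : r = n := hr2 ((Finset.mem_union.1 hm).resolve_left h)
      have : e = 0 := by omega
      simp [this]
  refine this.mono fun co hco t h1 h2 => ?_
  exact no_common_root (pl_natDegree hm0) (pl_natDegree hm1) hn hco t h1 h2

lemma Gen_A (SS : Fin 4 → Finset ℕ) {i0 i1 i2 i3 : Fin 4} (hd : [i0, i1, i2, i3].Nodup) (n : ℕ)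
    (hn : n ≠ 0) (hne0 : (SS i0).Nonempty) (hne : (SS i1).Nonempty) (h0 : 0 ∈ SS i0 ∪ SS i1)
    (hm : n ∈ SS i0 ∪ SS i1)
    (hmax : ∀ s ∈ SS i0 ∪ SS i1, s ≤ n) :
    Gen SS (fun co => ∀ t, (pl SS co i0).eval t = 0 → (pl SS co i1).eval t = 0 → False) := by
  rcases Finset.mem_union.1 h0 with h | h
  · exact Gen_A_aux SS hd n hn hne h hm hmax
  · have hd' : [i1, i0, i2, i3].Nodup := by
      simp only [List.nodup_cons, List.mem_cons, List.not_mem_nil, not_or] at hd ⊢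
      tauto
    refine (Gen_A_aux SS hd' n hn hne0 h (by rwa [Finset.union_comm]) (by rwa [Finset.union_comm])).mono ?_
    intro c hc t h1 h2
    exact hc t h2 h1

/-- the resultant with respect to `t` of `f` and `y q - p` -/
noncomputable def hz {A : Type*} [CommRing A] (f p q : A[X]) (n m : ℕ) : A[X] :=
  resultant (f.map C) (C X * q.map C - p.map C) n m

lemma hz_map {A B : Type*} [CommRing A] [CommRing B] (φ : A →+* B) (f p q : A[X]) (n m : ℕ) :
    hz (f.map φ) (p.map φ) (q.map φ) n m = (hz f p q n m).map φ := by
  have hs : ∀ p : A[X], (p.map C).map (mapRingHom φ) = (p.map φ).map C := by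
    intro p
    rw [Polynomial.map_map, Polynomial.map_map]
    congr 1
    ext1 a
    simp
  have := resultant_map_map (f := f.map C)
      (g := (C X * q.map C - p.map C)) n m (φ := mapRingHom φ)
  rw [Polynomial.map_sub, Polynomial.map_mul, hs, hs, hs, map_C, coe_mapRingHom, map_X] at this
  exact this

lemma natDegree_det_col {S : Type*} [CommRing S] {N : ℕ} (M : Matrix (Fin N) (Fin N) S[X]) (d : Fin N → ℕ)
    (h : ∀ i j, (M i j).natDegree ≤ d j) :
    M.det.natDegree ≤ ∑ j, d j := by
  rw [Matrix.det_apply]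
  apply natDegree_sum_le_of_forall_le
  intro σ _
  have := (coeff_prod_natDegree Finset.univ (fun i => M (σ i) i) d (fun i _ => h _ _)).1
  rcases Int.units_eq_one_or (Equiv.Perm.sign σ) with h2 | h2 <;> rw [h2] <;> simpa using this

lemma hz_natDegree {S : Type*} [CommRing S] (f p q : S[X]) (n m : ℕ) :
    (hz f p q n m).natDegree ≤ n := by
  have := natDegree_det_col (sylvester (f.map C) (C X * q.map C - p.map C : S[X][X]) n m)
    (Fin.addCases (fun _ => 1) (fun _ => 0)) (by
      intro i j
      induction j using Fin.addCases with
      | left j =>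
        simp only [sylvester, Matrix.of_apply, Fin.addCases_left]
        split_ifs
        · simp only [coeff_sub, coeff_C_mul, coeff_map]
          compute_degree
        · simp
      | right j =>
        simp only [sylvester, Matrix.of_apply, Fin.addCases_right]
        split_ifs <;> simp)
  rw [Fin.sum_univ_add] at this
  simp only [Fin.addCases_left, Fin.addCases_right, Finset.sum_const, Finset.card_univ,
    Fintype.card_fin, smul_eq_mul, mul_one, mul_zero, add_zero] at this
  exact this

lemma hz_prod (f p q : ℂ[X]) (n m : ℕ) (hf : f.natDegree = n) (hp : p.natDegree ≤ m)
    (hq : q.natDegree ≤ m) :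
    hz f p q n m = C (f.leadingCoeff ^ m) *
      (f.roots.map (fun a => X * C (q.eval a) - C (p.eval a))).prod := by
  have hcard : f.roots.card = n := by rw [IsAlgClosed.card_roots_eq_natDegree, hf]
  have hsplit : (f.map C : ℂ[X][X]) = C (C f.leadingCoeff) *
      ((f.roots.map C).map (fun a => X - C a)).prod := by
    conv_lhs => rw [(IsAlgClosed.splits f).eq_prod_roots]
    rw [Polynomial.map_mul, Polynomial.map_multiset_prod, map_C]
    simp
  have hg : (C X * q.map C - p.map C : ℂ[X][X]).natDegree ≤ m := by
    refine (natDegree_sub_le _ _).trans (max_le ?_ (natDegree_map_le.trans hp))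
    exact (natDegree_C_mul_le _ _).trans (natDegree_map_le.trans hq)
  have h := resultant_multiset (f.roots.map C) _ m hg
  rw [Multiset.card_map, hcard] at h
  rw [hz, hsplit, resultant_C_mul_left, h, C_pow, Multiset.map_map]
  congr 2
  apply Multiset.map_congr rfl
  intro a _
  exact eval_f0 _ _ _

lemma roots_of_hz (f p q : ℂ[X]) (n m : ℕ) (hn : n ≠ 0) (hf : f.natDegree = n) (hp : p.natDegree ≤ m)
    (hq : q.natDegree ≤ m) (h1 : (hz f p q n m).coeff n ≠ 0)
    (h2 : resultant (hz f p q n m) (derivative (hz f p q n m)) n (n - 1) ≠ 0) :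
    ∃ T : Finset ℂ, T.card = n ∧ ∀ y ∈ T, ∃ a, f.eval a = 0 ∧ q.eval a ≠ 0 ∧ y * q.eval a = p.eval a := by
  classical
  set h := hz f p q n m with hh
  have hd : h.natDegree = n := le_antisymm (hz_natDegree _ _ _ _ _) (le_natDegree_of_ne_zero h1)
  have h0 : h ≠ 0 := by intro h'; rw [h'] at h1; simp at h1
  have hsep : h.Separable := by
    obtain ⟨a, b, -, -, hab⟩ := exists_mul_add_mul_eq_C_resultant h (derivative h) hd.le
      ((natDegree_derivative_le h).trans (by rw [hd])) (Or.inl hn)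
    refine ⟨C (resultant h (derivative h) n (n - 1))⁻¹ * a, C (resultant h (derivative h) n (n - 1))⁻¹ * b, ?_⟩
    have : C (resultant h (derivative h) n (n - 1))⁻¹ * (h * a + derivative h * b) = 1 := by
      rw [hab, ← C_mul, inv_mul_cancel₀ h2, C_1]
    rw [← this]; ring
  refine ⟨h.roots.toFinset, ?_, ?_⟩
  · rw [Multiset.toFinset_card_of_nodup (nodup_roots hsep), IsAlgClosed.card_roots_eq_natDegree, hd]
  · intro y hy
    have hy' : h.eval y = 0 := (mem_roots'.1 (Multiset.mem_toFinset.1 hy)).2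
    have hpr := hz_prod f p q n m hf hp hq
    rw [← hh] at hpr
    rw [hpr, eval_mul, eval_C, mul_eq_zero] at hy'
    have hlc : f.leadingCoeff ^ m ≠ 0 := by
      apply pow_ne_zero
      rw [Ne, leadingCoeff_eq_zero]
      rintro rfl; simp at hf; omega
    have hy2 := hy'.resolve_left hlc
    rw [eval_multiset_prod, Multiset.prod_eq_zero_iff, Multiset.map_map, Multiset.mem_map] at hy2
    obtain ⟨a, ha, ha2⟩ := hy2
    simp only [Function.comp_apply, eval_sub, eval_mul, eval_X, eval_C] at ha2
    refine ⟨a, (mem_roots'.1 ha).2, ?_, by linear_combination ha2⟩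
    intro hqa
    apply h0
    rw [hpr]
    have hz : (f.roots.map (fun a => X * C (q.eval a) - C (p.eval a))).prod = 0 := by
      rw [Multiset.prod_eq_zero_iff, Multiset.mem_map]
      refine ⟨a, ha, ?_⟩
      rw [hqa] at ha2 ⊢
      have : p.eval a = 0 := by linear_combination -ha2
      simp [this]
    rw [hz, mul_zero]

lemma hz_good (f p q : ℂ[X]) (n m : ℕ) (hn : n ≠ 0) (hf : f.natDegree = n) (hfs : f.roots.Nodup)
    (hp : p.natDegree ≤ m)
    (hq : q.natDegree ≤ m) (h1 : ∀ a ∈ f.roots, q.eval a ≠ 0)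
    (h2 : ∀ a ∈ f.roots, ∀ b ∈ f.roots, a ≠ b → p.eval a * q.eval b ≠ p.eval b * q.eval a) :
    (hz f p q n m).coeff n ≠ 0 ∧
    resultant (hz f p q n m) (derivative (hz f p q n m)) n (n - 1) ≠ 0 := by
  classical
  have hpr := hz_prod f p q n m hf hp hq
  set h := hz f p q n m with hh
  have hlc : f.leadingCoeff ^ m ≠ 0 := by
    apply pow_ne_zero
    rw [Ne, leadingCoeff_eq_zero]
    rintro rfl; simp at hf; omega
  have hT : f.roots = f.roots.toFinset.val := by simp [hfs.dedup]
  have e1 : (f.roots.map (fun a => X * C (q.eval a) - C (p.eval a))).prod =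
      C (∏ a ∈ f.roots.toFinset, q.eval a) *
      ∏ a ∈ f.roots.toFinset, (X - C (p.eval a / q.eval a)) := by
    conv_lhs => rw [hT]
    rw [map_prod, ← Finset.prod_mul_distrib]
    show ∏ a ∈ f.roots.toFinset, (X * C (q.eval a) - C (p.eval a)) = _
    apply Finset.prod_congr rfl
    intro a ha
    have := h1 a (Multiset.mem_toFinset.1 ha)
    rw [mul_sub, ← C_mul, mul_div_cancel₀ _ this]; ring
  have hcard : f.roots.toFinset.card = n := by
    rw [Multiset.toFinset_card_of_nodup hfs, IsAlgClosed.card_roots_eq_natDegree, hf]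
  set g : ℂ[X] := ∏ a ∈ f.roots.toFinset, (X - C (p.eval a / q.eval a)) with hg
  have hgs : g.Separable := by
    rw [hg, separable_prod_X_sub_C_iff']
    intro a ha b hb hab
    by_contra hne
    apply h2 a (Multiset.mem_toFinset.1 ha) b (Multiset.mem_toFinset.1 hb) hne
    rw [div_eq_div_iff (h1 a (Multiset.mem_toFinset.1 ha)) (h1 b (Multiset.mem_toFinset.1 hb))] at hab
    exact hab
  have hgm : g.Monic := monic_prod_X_sub_C _ _
  have hgd : g.natDegree = n := by rw [hg, natDegree_finsetProd_X_sub_C_eq_card, hcard]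
  have hk : f.leadingCoeff ^ m * (∏ a ∈ f.roots.toFinset, q.eval a) ≠ 0 :=
    mul_ne_zero hlc (Finset.prod_ne_zero_iff.2 fun a ha => h1 a (Multiset.mem_toFinset.1 ha))
  have hhg : h = C (f.leadingCoeff ^ m * (∏ a ∈ f.roots.toFinset, q.eval a)) * g := by
    rw [hpr, e1, C_mul]; ring
  set k := f.leadingCoeff ^ m * (∏ a ∈ f.roots.toFinset, q.eval a) with hkk
  have hhd : h.natDegree = n := by rw [hhg, natDegree_C_mul hk, hgd]
  have hhs : h.Separable := by
    rw [hhg]; exact Separable.unit_mul (isUnit_C.2 hk.isUnit) hgs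
  constructor
  · rw [hhg, coeff_C_mul, ← hgd, hgm.coeff_natDegree]; simpa using hk
  · have hd' : (derivative h).natDegree = n - 1 := by
      rw [natDegree_derivative, hhd]
    have := resultant_ne_zero h (derivative h) hhs
    rwa [hhd, hd'] at this

lemma exists_f (S0 S1 : Finset ℕ) (n m : ℕ) (hn : n ≠ 0) (hnm : n ∈ S0) (hmax : ∀ s ∈ S0, s ≤ n)
    (h0 : 0 ∈ S0) (hm : m ≠ 0) (hmm : m ∈ S1)
    (hg : ∀ d, (∀ s ∈ S0, d ∣ s) → (∀ s ∈ S1, d ∣ s) → d = 1) :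
    ∃ f : ℂ[X], f.natDegree = n ∧ f.coeff n ≠ 0 ∧ f.roots.Nodup ∧ (∀ k, f.coeff k ≠ 0 → k ∈ S0) ∧
      (∀ a ∈ f.roots, a ≠ 0) ∧ ∀ a ∈ f.roots, ∀ b ∈ f.roots, a ≠ b → ∃ s ∈ S1, a ^ s ≠ b ^ s := by
  classical
  set B : ℂ[X] := ones (S0.erase 0) with hB
  have hB0 : B.eval 0 = 0 := by
    rw [← coeff_zero_eq_eval_zero, hB, ones_coeff]; simp
  have hBd : B.natDegree ≤ n := ones_natDegree fun s hs => hmax s (Finset.mem_of_mem_erase hs)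
  have hBn : B.coeff n = 1 := by rw [hB, ones_coeff]; simp [hn, hnm]
  have hBnd : B.natDegree = n := le_antisymm hBd (le_natDegree_of_ne_zero (by rw [hBn]; simp))
  have hB' : derivative B ≠ 0 := by
    intro h
    have := derivative_eq_zero.1 h
    omega
  let Z : Finset ℂ := ((nthRoots m (1 : ℂ)).toFinset).filter (fun z => z ≠ 1 ∧ ∀ s ∈ S1, z ^ s = 1)
  have hZ : ∀ ζ ∈ Z, B.comp (C ζ * X) - B ≠ 0 := by
    intro ζ hζ h
    obtain ⟨-, h1, h2⟩ := Finset.mem_filter.1 hζ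
    apply h1
    rw [← orderOf_eq_one_iff]
    apply hg
    · intro s hs
      apply orderOf_dvd_of_pow_eq_one
      by_cases hs0 : s = 0
      · simp [hs0]
      have := congrArg (fun p => coeff p s) h
      simp only [coeff_sub, comp_C_mul_X_coeff, coeff_zero, hB, ones_coeff] at this
      simp only [Finset.mem_erase, hs, hs0, ne_eq, not_false_eq_true, and_self, if_true, one_mul] at this
      linear_combination this
    · intro s hs
      exact orderOf_dvd_of_pow_eq_one (h2 s hs)
  let Bad : Finset ℂ := {0} ∪ (derivative B).roots.toFinset.image (fun a => B.eval a) ∪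
    Z.biUnion (fun ζ => (B.comp (C ζ * X) - B).roots.toFinset.image (fun a => B.eval a))
  obtain ⟨z, hz⟩ := Infinite.exists_notMem_finset Bad
  have hz0 : z ≠ 0 := by
    rintro rfl
    apply hz
    simp [Bad]
  have hz1 : ∀ a, (derivative B).eval a = 0 → B.eval a ≠ z := by
    intro a ha hh
    apply hz
    refine Finset.mem_union_left _ (Finset.mem_union_right _ ?_)
    rw [Finset.mem_image]
    exact ⟨a, Multiset.mem_toFinset.2 ((mem_roots hB').2 ha), hh⟩
  have hz2 : ∀ ζ ∈ Z, ∀ a, B.eval (ζ * a) = B.eval a → B.eval a ≠ z := by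
    intro ζ hζ a ha hh
    apply hz
    refine Finset.mem_union_right _ ?_
    rw [Finset.mem_biUnion]
    refine ⟨ζ, hζ, ?_⟩
    rw [Finset.mem_image]
    refine ⟨a, Multiset.mem_toFinset.2 ((mem_roots (hZ ζ hζ)).2 ?_), hh⟩
    simp [ha]
  have hfn : (B - C z).coeff n = 1 := by rw [coeff_sub, hBn, coeff_C, if_neg hn, sub_zero]
  have hf0 : B - C z ≠ 0 := by intro h; rw [h] at hfn; simp at hfn
  have hr : ∀ a, a ∈ (B - C z).roots → B.eval a = z := by
    intro a ha
    have := (mem_roots'.1 ha).2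
    rw [IsRoot, eval_sub, eval_C] at this
    linear_combination this
  have hr0 : ∀ a ∈ (B - C z).roots, a ≠ 0 := by
    rintro a ha rfl
    have := hr _ ha
    rw [hB0] at this
    exact hz0 this.symm
  refine ⟨B - C z, ?_, ?_, ?_, ?_, hr0, ?_⟩
  · rw [natDegree_sub_C, hBnd]
  · rw [hfn]; simp
  · rw [Multiset.nodup_iff_count_le_one]
    intro a
    rw [count_roots]
    by_contra hcon
    push Not at hcon
    rw [one_lt_rootMultiplicity_iff_isRoot hf0] at hcon
    obtain ⟨h1, h2⟩ := hcon
    rw [derivative_sub, derivative_C, sub_zero] at h2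
    exact hz1 a h2 (hr a ((mem_roots hf0).2 h1))
  · intro k hk
    by_cases hk0 : k = 0
    · rw [hk0]; exact h0
    · rw [coeff_sub, coeff_C, if_neg hk0, sub_zero] at hk
      exact Finset.mem_of_mem_erase (ones_supp _ _ hk)
  · intro a ha b hb hab
    by_contra hcon
    push Not at hcon
    have ha0 := hr0 a ha
    have hs : ∀ s ∈ S1, (b / a) ^ s = 1 := by
      intro s hs
      rw [div_pow, ← hcon s hs, div_self (pow_ne_zero _ ha0)]
    refine hz2 (b / a) ?_ a ?_ (hr a ha)
    · refine Finset.mem_filter.2 ⟨?_, ?_, hs⟩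
      · rw [Multiset.mem_toFinset, mem_nthRoots (Nat.pos_of_ne_zero hm)]
        exact hs m hmm
      · intro h
        rw [div_eq_one_iff_eq ha0] at h
        exact hab h.symm
    · rw [div_mul_cancel₀ _ ha0, hr a ha, hr b hb]

lemma Gen_pq (SS : Fin 4 → Finset ℕ) {i0 i1 i2 i3 : Fin 4} (hd : [i0, i1, i2, i3].Nodup)
    (hne2 : (SS i2).Nonempty) (hne3 : (SS i3).Nonempty) (h01 : 0 ∈ SS i2 ∪ SS i3)
    (s : Finset ℂ) (hs0 : ∀ a ∈ s, a ≠ 0)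
    (hs : ∀ a ∈ s, ∀ b ∈ s, a ≠ b → ∃ k ∈ SS i2 ∪ SS i3, a ^ k ≠ b ^ k) :
    ∃ c, (∀ a ∈ s, (pl SS c i3).eval a ≠ 0) ∧ ∀ a ∈ s, ∀ b ∈ s, a ≠ b →
      (pl SS c i2).eval a * (pl SS c i3).eval b ≠ (pl SS c i2).eval b * (pl SS c i3).eval a := by
  classical
  have key : ∀ (c : Ix SS → ℂ) (i : Fin 4) (a : ℂ), (pl SS c i).eval a =
      MvPolynomial.eval c ((plU SS i).eval (MvPolynomial.C a)) := by
    intro c i a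
    rw [← plU_map, eval_map, ← Polynomial.eval₂_at_apply, MvPolynomial.eval_C]
  have G1 : Gen SS (fun c => ∀ a ∈ s, (pl SS c i3).eval a ≠ 0) := by
    apply Gen.ball
    intro a ha
    simp only [key]
    apply Gen.of_poly
    obtain ⟨r, hr⟩ := hne3
    obtain ⟨co, -, -, -, h3⟩ := exists_pl4 SS hd 0 0 0 (X ^ r) (by simp) (by simp) (by simp)
      (X_pow_supp hr)
    refine ⟨co, ?_⟩
    rw [← key, h3]
    simp [hs0 a ha]
  have G2 : Gen SS (fun c => ∀ x ∈ s.offDiag,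
      (pl SS c i2).eval x.1 * (pl SS c i3).eval x.2 - (pl SS c i2).eval x.2 * (pl SS c i3).eval x.1 ≠ 0) := by
    apply Gen.ball
    rintro ⟨a, b⟩ hab
    obtain ⟨ha, hb, hab⟩ := Finset.mem_offDiag.1 hab
    simp only [key, ← map_mul, ← map_sub]
    apply Gen.of_poly
    by_contra hcon
    push Not at hcon
    simp only [map_sub, map_mul, ← key] at hcon
    have ha0 := hs0 a ha
    have hb0 := hs0 b hb
    have h1 : ∀ k ∈ SS i2, ∀ r ∈ SS i3, a ^ k * b ^ r = b ^ k * a ^ r := by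
      intro k hk r hr
      obtain ⟨co, -, -, h2, h3⟩ := exists_pl4 SS hd 0 0 (X ^ k) (X ^ r) (by simp) (by simp)
        (X_pow_supp hk) (X_pow_supp hr)
      have := hcon co
      rw [h2, h3] at this
      simp only [eval_pow, eval_X] at this
      linear_combination this
    obtain ⟨k, hk, hne⟩ := hs a ha b hb hab
    apply hne
    obtain ⟨k0, hk0⟩ := hne2
    obtain ⟨r0, hr0⟩ := hne3
    rcases Finset.mem_union.1 h01 with h | h
    · have h2 : ∀ r ∈ SS i3, a ^ r = b ^ r := by
        intro r hr
        have := h1 0 h r hr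
        simp only [pow_zero, one_mul] at this
        exact this.symm
      rcases Finset.mem_union.1 hk with hk | hk
      · have := h1 k hk r0 hr0
        rw [h2 r0 hr0] at this
        exact mul_right_cancel₀ (pow_ne_zero _ hb0) this
      · exact h2 k hk
    · have h2 : ∀ r ∈ SS i2, a ^ r = b ^ r := by
        intro r hr
        have := h1 r hr 0 h
        simpa using this
      rcases Finset.mem_union.1 hk with hk | hk
      · exact h2 k hk
      · have := h1 k0 hk0 k hk
        rw [h2 k0 hk0] at this
        exact (mul_left_cancel₀ (pow_ne_zero _ hb0) this).symm
  obtain ⟨c, hc1, hc2⟩ := (G1.and G2).exists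
  refine ⟨c, hc1, fun a ha b hb hab => ?_⟩
  exact sub_ne_zero.1 (hc2 (a, b) (Finset.mem_offDiag.2 ⟨ha, hb, hab⟩))

lemma Gen_B (SS : Fin 4 → Finset ℕ) {i0 i1 i2 i3 : Fin 4} (hd : [i0, i1, i2, i3].Nodup) (n m : ℕ)
    (hn : n ≠ 0) (hm : m ≠ 0) (hne2 : (SS i2).Nonempty) (hne3 : (SS i3).Nonempty)
    (h0 : 0 ∈ SS i0 ∪ SS i1) (h01 : 0 ∈ SS i2 ∪ SS i3)
    (hnm : n ∈ SS i0 ∪ SS i1) (hmax : ∀ s ∈ SS i0 ∪ SS i1, s ≤ n)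
    (hmm : m ∈ SS i2 ∪ SS i3) (hmax1 : ∀ s ∈ SS i2 ∪ SS i3, s ≤ m)
    (hg : ∀ d, (∀ s ∈ SS i0 ∪ SS i1, d ∣ s) → (∀ s ∈ SS i2 ∪ SS i3, d ∣ s) → d = 1) :
    Gen SS (fun c => (pl SS c i1 - pl SS c i0).natDegree = n ∧
      ∃ T : Finset ℂ, T.card = n ∧ ∀ y ∈ T, ∃ a, (pl SS c i1 - pl SS c i0).eval a = 0 ∧
        (pl SS c i3).eval a ≠ 0 ∧ y * (pl SS c i3).eval a = (pl SS c i2).eval a) := by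
  classical
  have hm2 : ∀ s ∈ SS i2, s ≤ m := fun s hs => hmax1 s (Finset.mem_union_left _ hs)
  have hm3 : ∀ s ∈ SS i3, s ≤ m := fun s hs => hmax1 s (Finset.mem_union_right _ hs)
  -- the special point
  obtain ⟨c0, hc1, hc2, hc3⟩ : ∃ c : Ix SS → ℂ, (pl SS c i1 - pl SS c i0).coeff n ≠ 0 ∧
      (hz (pl SS c i1 - pl SS c i0) (pl SS c i2) (pl SS c i3) n m).coeff n ≠ 0 ∧
      resultant (hz (pl SS c i1 - pl SS c i0) (pl SS c i2) (pl SS c i3) n m)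
        (derivative (hz (pl SS c i1 - pl SS c i0) (pl SS c i2) (pl SS c i3) n m)) n (n - 1) ≠ 0 := by
    obtain ⟨f, hf1, hf2, hf3, hf4, hf5, hf6⟩ := exists_f _ _ n m hn hnm hmax h0 hm hmm hg
    obtain ⟨c', h1, h2⟩ := Gen_pq SS hd hne2 hne3 h01 f.roots.toFinset
      (fun a ha => hf5 a (Multiset.mem_toFinset.1 ha))
      (fun a ha b hb hab => hf6 a (Multiset.mem_toFinset.1 ha) b (Multiset.mem_toFinset.1 hb) hab)
    let q : ℂ[X] := ∑ s ∈ SS i1, C (f.coeff s) * X ^ s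
    have hq : ∀ k, q.coeff k = if k ∈ SS i1 then f.coeff k else 0 := by
      intro k
      simp only [q, finsetSum_coeff, coeff_C_mul, coeff_X_pow, mul_ite, mul_one, mul_zero]
      simp
    obtain ⟨c, e0, e1, e2, e3⟩ := exists_pl4 SS hd (q - f) q (pl SS c' i2) (pl SS c' i3)
      (by
        intro k hk
        rw [coeff_sub, hq] at hk
        split_ifs at hk with h
        · simp at hk
        · rw [zero_sub, neg_ne_zero] at hk
          exact (Finset.mem_union.1 (hf4 k hk)).resolve_right h)
      (by
        intro k hk
        rw [hq] at hk
        by_contra h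
        simp [h] at hk) (fun k => pl_supp) (fun k => pl_supp)
    refine ⟨c, ?_⟩
    rw [e0, e1, e2, e3, sub_sub_cancel]
    refine ⟨hf2, ?_⟩
    exact hz_good f _ _ n m hn hf1 hf3 (pl_natDegree hm2) (pl_natDegree hm3)
      (fun a ha => h1 a (Multiset.mem_toFinset.2 ha))
      (fun a ha b hb => h2 a (Multiset.mem_toFinset.2 ha) b (Multiset.mem_toFinset.2 hb))
  have kf : ∀ c : Ix SS → ℂ, pl SS c i1 - pl SS c i0 = (plU SS i1 - plU SS i0).map (MvPolynomial.eval c) := by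
    intro c; rw [Polynomial.map_sub, plU_map, plU_map]
  have kh : ∀ c : Ix SS → ℂ, hz (pl SS c i1 - pl SS c i0) (pl SS c i2) (pl SS c i3) n m =
      (hz (plU SS i1 - plU SS i0) (plU SS i2) (plU SS i3) n m).map (MvPolynomial.eval c) := by
    intro c; rw [← hz_map, ← kf, plU_map, plU_map]
  have G1 : Gen SS (fun c => (pl SS c i1 - pl SS c i0).coeff n ≠ 0) := by
    have k : ∀ c : Ix SS → ℂ, (pl SS c i1 - pl SS c i0).coeff n =
      MvPolynomial.eval c ((plU SS i1 - plU SS i0).coeff n) := by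
      intro c; rw [kf, coeff_map]
    simp only [k]
    exact Gen.of_poly _ ⟨c0, by rw [← k]; exact hc1⟩
  have G2 : Gen SS (fun c => (hz (pl SS c i1 - pl SS c i0) (pl SS c i2) (pl SS c i3) n m).coeff n ≠ 0) := by
    have k : ∀ c : Ix SS → ℂ, (hz (pl SS c i1 - pl SS c i0) (pl SS c i2) (pl SS c i3) n m).coeff n =
      MvPolynomial.eval c ((hz (plU SS i1 - plU SS i0) (plU SS i2) (plU SS i3) n m).coeff n) := by
      intro c; rw [kh, coeff_map]
    simp only [k]
    exact Gen.of_poly _ ⟨c0, by rw [← k]; exact hc2⟩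
  have G3 : Gen SS (fun c => resultant (hz (pl SS c i1 - pl SS c i0) (pl SS c i2) (pl SS c i3) n m)
        (derivative (hz (pl SS c i1 - pl SS c i0) (pl SS c i2) (pl SS c i3) n m)) n (n - 1) ≠ 0) := by
    have k : ∀ c : Ix SS → ℂ, resultant (hz (pl SS c i1 - pl SS c i0) (pl SS c i2) (pl SS c i3) n m)
        (derivative (hz (pl SS c i1 - pl SS c i0) (pl SS c i2) (pl SS c i3) n m)) n (n - 1) =
      MvPolynomial.eval c (resultant (hz (plU SS i1 - plU SS i0) (plU SS i2) (plU SS i3) n m)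
        (derivative (hz (plU SS i1 - plU SS i0) (plU SS i2) (plU SS i3) n m)) n (n - 1)) := by
      intro c; rw [kh, derivative_map, resultant_map_map]
    simp only [k]
    exact Gen.of_poly _ ⟨c0, by rw [← k]; exact hc3⟩
  refine (G1.and (G2.and G3)).mono ?_
  rintro c ⟨h1, h2, h3⟩
  have hle : (pl SS c i1 - pl SS c i0).natDegree ≤ n :=
    (natDegree_sub_le _ _).trans (max_le
      (pl_natDegree fun s hs => hmax s (Finset.mem_union_right _ hs))
      (pl_natDegree fun s hs => hmax s (Finset.mem_union_left _ hs)))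
  have hd1 := le_antisymm hle (le_natDegree_of_ne_zero h1)
  exact ⟨hd1, roots_of_hz _ _ _ n m hn hd1 (pl_natDegree hm2) (pl_natDegree hm3) h2 h3⟩

/-- evaluation of a bivariate polynomial in an algebra -/
noncomputable def evK {k K : Type} [Field k] [Field K] [Algebra k K] (x y : K) : k[X][X] →+* K :=
  eval₂RingHom ((aeval x : k[X] →ₐ[k] K) : k[X] →+* K) y

lemma evK_mon {k K : Type} [Field k] [Field K] [Algebra k K] (x y : K) (i j : ℕ) (a : k) :
    evK x y (monomial j (monomial i a)) = algebraMap k K a * x ^ i * y ^ j := by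
  simp [evK, eval₂_monomial]

lemma evK_CC {k K : Type} [Field k] [Field K] [Algebra k K] (x y : K) (a : k) :
    evK x y (C (C a)) = algebraMap k K a := by
  simp [evK]

lemma evK_CX {k K : Type} [Field k] [Field K] [Algebra k K] (x y : K) :
    evK (k := k) x y (C X) = x := by
  simp [evK]

lemma evK_X {k K : Type} [Field k] [Field K] [Algebra k K] (x y : K) :
    evK (k := k) x y X = y := by
  simp [evK]

lemma clear_denoms {k : Type} [Field k] (p0 q0 p1 q1 : k[X]) (ψ : k[X][X]) :
    ∃ (N : ℕ) (U : k[X]), ∀ (K : Type) [Field K] [Algebra k K] (g : k[X] →ₐ[k] K), g q0 ≠ 0 → g q1 ≠ 0 →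
      g U = (g q0 * g q1) ^ N * evK (g p0 / g q0) (g p1 / g q1) ψ := by
  induction ψ using Polynomial.induction_on' with
  | add p q hp hq =>
    obtain ⟨N1, U1, h1⟩ := hp
    obtain ⟨N2, U2, h2⟩ := hq
    refine ⟨N1 + N2, U1 * (q0 * q1) ^ N2 + U2 * (q0 * q1) ^ N1, ?_⟩
    intro K _ _ g hq0 hq1
    rw [map_add, map_mul, map_mul, map_pow, map_pow, map_mul, h1 K g hq0 hq1, h2 K g hq0 hq1, map_add]
    ring
  | monomial j p =>
    induction p using Polynomial.induction_on' with
    | add p q hp hq =>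
      obtain ⟨N1, U1, h1⟩ := hp
      obtain ⟨N2, U2, h2⟩ := hq
      refine ⟨N1 + N2, U1 * (q0 * q1) ^ N2 + U2 * (q0 * q1) ^ N1, ?_⟩
      intro K _ _ g hq0 hq1
      rw [map_add, map_mul, map_mul, map_pow, map_pow, map_mul, h1 K g hq0 hq1, h2 K g hq0 hq1, map_add,
        map_add]
      ring
    | monomial i a =>
      refine ⟨i + j, C a * p0 ^ i * q0 ^ j * p1 ^ j * q1 ^ i, ?_⟩
      intro K _ _ g hq0 hq1
      rw [evK_mon]
      have : g (C a) = algebraMap k K a := g.commutes a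
      simp only [map_mul, map_pow, this]
      rw [div_pow, div_pow, mul_pow, pow_add, pow_add]
      field_simp

lemma vanish_at {k : Type} [Field k] (p0 q0 p1 q1 : k[X]) (ψ : k[X][X]) (h0 : q0 ≠ 0) (h1 : q1 ≠ 0)
    (hv : evK (algebraMap k[X] (RatFunc k) p0 / algebraMap k[X] (RatFunc k) q0)
      (algebraMap k[X] (RatFunc k) p1 / algebraMap k[X] (RatFunc k) q1) ψ = 0)
    (a : k) (h0a : q0.eval a ≠ 0) (h1a : q1.eval a ≠ 0) :
    evK (p0.eval a / q0.eval a) (p1.eval a / q1.eval a) ψ = 0 := by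
  obtain ⟨N, U, hU⟩ := clear_denoms p0 q0 p1 q1 ψ
  have e1 := hU (RatFunc k) (IsScalarTower.toAlgHom k k[X] (RatFunc k))
    (by simpa using h0) (by simpa using h1)
  simp only [IsScalarTower.coe_toAlgHom'] at e1
  rw [hv, mul_zero] at e1
  have hU0 : U = 0 := RatFunc.algebraMap_injective k (by rw [e1, map_zero])
  have e2 := hU k (aeval a) (by simpa using h0a) (by simpa using h1a)
  rw [hU0, map_zero] at e2
  simp only [coe_aeval_eq_eval] at e2
  have := (mul_eq_zero.1 e2.symm).resolve_left (pow_ne_zero _ (mul_ne_zero h0a h1a))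
  exact this

lemma natDegree_lower {k : Type} [Field k] (p0 q0 p1 q1 : k[X]) (ψ : k[X][X]) (h0 : q0 ≠ 0) (h1 : q1 ≠ 0)
    (hψ : Irreducible ψ)
    (hv : evK (algebraMap k[X] (RatFunc k) p0 / algebraMap k[X] (RatFunc k) q0)
      (algebraMap k[X] (RatFunc k) p1 / algebraMap k[X] (RatFunc k) q1) ψ = 0)
    (hne : q0 ≠ p0) (hcom : ∀ t, p0.eval t = 0 → q0.eval t = 0 → False)
    (T : Finset k) (hT : ∀ y ∈ T, ∃ a, (q0 - p0).eval a = 0 ∧ q1.eval a ≠ 0 ∧ y * q1.eval a = p1.eval a) :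
    T.card ≤ ψ.natDegree := by
  classical
  set χ : k[X] := ψ.map (evalRingHom 1) with hχ
  have hroot : ∀ y ∈ T, χ.eval y = 0 := by
    intro y hy
    obtain ⟨a, ha, hqa, hya⟩ := hT y hy
    have hpq : q0.eval a = p0.eval a := by rw [eval_sub] at ha; linear_combination ha
    have hq0a : q0.eval a ≠ 0 := fun h => hcom a (by rw [← hpq, h]) h
    have := vanish_at p0 q0 p1 q1 ψ h0 h1 hv a hq0a hqa
    rw [← hpq, div_self hq0a, ← hya, mul_div_cancel_right₀ _ hqa] at this
    rw [hχ, eval_map]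
    exact this
  have hχ0 : χ ≠ 0 := by
    intro h
    have hdvd : C (X - C 1) ∣ ψ := by
      rw [C_dvd_iff_dvd_coeff]
      intro i
      rw [dvd_iff_isRoot]
      have := congrArg (fun p => coeff p i) h
      simp only [hχ, coeff_map, coeff_zero] at this
      exact this
    have hirr : Irreducible (C (X - C 1) : k[X][X]) := by
      have : Prime (C (X - C 1) : k[X][X]) := prime_C_iff.2 (prime_X_sub_C 1)
      exact this.irreducible
    have hass := (hirr.dvd_irreducible_iff_associated hψ).1 hdvd
    have hd2 := hass.symm.dvd
    obtain ⟨u, hu⟩ := hd2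
    have := congrArg (evK (algebraMap k[X] (RatFunc k) p0 / algebraMap k[X] (RatFunc k) q0)
      (algebraMap k[X] (RatFunc k) p1 / algebraMap k[X] (RatFunc k) q1)) hu
    rw [map_mul, hv, zero_mul, C_sub, map_sub, evK_CX, evK_CC, map_one, sub_eq_zero,
      div_eq_one_iff_eq (by simpa using h0)] at this
    exact hne (RatFunc.algebraMap_injective k this).symm
  calc T.card ≤ χ.roots.toFinset.card := by
        apply Finset.card_le_card
        intro y hy
        rw [Multiset.mem_toFinset, mem_roots hχ0]
        exact hroot y hy
    _ ≤ χ.roots.card := Multiset.toFinset_card_le _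
    _ ≤ χ.natDegree := card_roots' _
    _ ≤ ψ.natDegree := natDegree_map_le

lemma not_alg {k : Type} [Field k] [IsAlgClosed k] (p0 q0 : k[X]) (h0 : q0 ≠ 0)
    (hn : (q0 - p0).natDegree ≠ 0) (hcom : ∀ t, p0.eval t = 0 → q0.eval t = 0 → False) :
    Function.Injective (aeval (algebraMap k[X] (RatFunc k) p0 / algebraMap k[X] (RatFunc k) q0) :
      k[X] →ₐ[k] RatFunc k) := by
  rw [injective_iff_map_eq_zero]
  intro p hp
  by_contra hp0
  set x := algebraMap k[X] (RatFunc k) p0 / algebraMap k[X] (RatFunc k) q0 with hx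
  have halg : IsAlgebraic k x := ⟨p, hp0, hp⟩
  have hirr := minpoly.irreducible halg.isIntegral
  obtain ⟨a, ha⟩ := minpoly.mem_range_of_degree_eq_one k x (IsAlgClosed.degree_eq_one_of_irreducible k hirr)
  have hq : algebraMap k[X] (RatFunc k) q0 ≠ 0 := by simpa using h0
  rw [hx, eq_div_iff hq, IsScalarTower.algebraMap_apply k k[X] (RatFunc k), ← map_mul] at ha
  have hp : C a * q0 = p0 := RatFunc.algebraMap_injective k ha
  have hqd : q0.natDegree ≠ 0 := by
    intro h
    apply hn
    have hp2 : p0.natDegree = 0 := by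
      have := natDegree_C_mul_le a q0
      rw [hp, h] at this; omega
    have := natDegree_sub_le q0 p0
    rw [h, hp2] at this
    simpa using this
  obtain ⟨t, ht⟩ := IsAlgClosed.exists_root q0 (fun h => hqd (natDegree_eq_of_degree_eq_some h))
  refine hcom t ?_ ht
  rw [← hp, eval_mul, ht.eq_zero, mul_zero]

lemma dvd_of_vanish {k : Type} [Field k] (x y : RatFunc k)
    (hx : Function.Injective (aeval x : k[X] →ₐ[k] RatFunc k)) (ψ R : k[X][X]) (hψ : Irreducible ψ)
    (hd : ψ.natDegree ≠ 0) (h1 : evK x y ψ = 0) (h2 : evK x y R = 0) : ψ ∣ R := by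
  have hprim := hψ.isPrimitive hd
  refine hprim.dvd_of_fraction_map_dvd_fraction_map (K := FractionRing k[X]) ?_
  have hirr := (hprim.irreducible_iff_irreducible_map_fraction_map (K := FractionRing k[X])).1 hψ
  by_contra hcon
  have hinj : Function.Injective ((aeval x : k[X] →ₐ[k] RatFunc k) : k[X] →+* RatFunc k) := hx
  have hcomp : (IsFractionRing.lift (K := FractionRing k[X]) hinj).comp (algebraMap k[X] (FractionRing k[X])) =
      ((aeval x : k[X] →ₐ[k] RatFunc k) : k[X] →+* RatFunc k) := by
    refine RingHom.ext fun a => ?_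
    exact IsFractionRing.lift_algebraMap hinj a
  have hev : ∀ p : k[X][X], eval₂ (IsFractionRing.lift (K := FractionRing k[X]) hinj) y
      (p.map (algebraMap k[X] (FractionRing k[X]))) = evK x y p := by
    intro p
    rw [eval₂_map, hcomp]; rfl
  obtain ⟨a, b, hab⟩ := (hirr.coprime_iff_not_dvd).2 hcon
  have := congrArg (eval₂ (IsFractionRing.lift (K := FractionRing k[X]) hinj) y) hab
  rw [eval₂_add, eval₂_mul, eval₂_mul, hev, hev, h1, h2, eval₂_one] at this
  simp at this

lemma Rz_vanish {k : Type} [Field k] (p0 q0 p1 q1 : k[X]) (h0 : q0 ≠ 0) (h1 : q1 ≠ 0) (n m : ℕ) (hn : n ≠ 0)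
    (hp0 : p0.natDegree ≤ n) (hq0 : q0.natDegree ≤ n) (hp1 : p1.natDegree ≤ m) (hq1 : q1.natDegree ≤ m) :
    evK (algebraMap k[X] (RatFunc k) p0 / algebraMap k[X] (RatFunc k) q0)
      (algebraMap k[X] (RatFunc k) p1 / algebraMap k[X] (RatFunc k) q1) (Rz p0 q0 p1 q1 n m) = 0 := by
  set ev := evK (k := k) (algebraMap k[X] (RatFunc k) p0 / algebraMap k[X] (RatFunc k) q0)
      (algebraMap k[X] (RatFunc k) p1 / algebraMap k[X] (RatFunc k) q1) with hev
  have hd : ∀ (z : k[X][X]) (p q : k[X]) (n : ℕ), p.natDegree ≤ n → q.natDegree ≤ n →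
      (C z * q.map (CCm k) - p.map (CCm k)).natDegree ≤ n := by
    intro z p q n hp hq
    refine (natDegree_sub_le _ _).trans (max_le ?_ (natDegree_map_le.trans hp))
    exact (natDegree_C_mul_le _ _).trans (natDegree_map_le.trans hq)
  obtain ⟨a, b, -, -, hab⟩ := exists_mul_add_mul_eq_C_resultant
    (C (C X) * q0.map (CCm k) - p0.map (CCm k)) (C X * q1.map (CCm k) - p1.map (CCm k))
    (hd _ _ _ n hp0 hq0) (hd _ _ _ m hp1 hq1) (Or.inl hn)
  have hq : ∀ q : k[X], eval₂ ev RatFunc.X (q.map (CCm k)) = algebraMap k[X] (RatFunc k) q := by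
    intro q
    rw [eval₂_map, ← RatFunc.aeval_X_left_eq_algebraMap, aeval_def]
    congr 1
    ext1 a
    exact evK_CC _ _ a
  have := congrArg (eval₂ ev RatFunc.X) hab
  rw [eval₂_add, eval₂_mul, eval₂_mul, eval₂_sub, eval₂_sub, eval₂_mul, eval₂_mul, eval₂_C, eval₂_C,
    eval₂_C, hq, hq, hq, hq, hev, evK_CX, evK_X, div_mul_cancel₀ _ (by simpa using h0),
    div_mul_cancel₀ _ (by simpa using h1), sub_self, sub_self, zero_mul, zero_mul, add_zero] at this
  exact this.symm

lemma bcf_swap {A : Type*} [CommRing A] (p : A[X][X]) (i j : ℕ) :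
    bcf (Bivariate.swap (R := A) p) i j = bcf p j i := by
  induction p using Polynomial.induction_on' with
  | add p q hp hq =>
    unfold bcf at *
    rw [map_add, coeff_add, coeff_add, coeff_add, coeff_add, hp, hq]
  | monomial k p =>
    induction p using Polynomial.induction_on' with
    | add p q hp hq =>
      unfold bcf at *
      rw [map_add, map_add, coeff_add, coeff_add, coeff_add, coeff_add, hp, hq]
    | monomial l a =>
      unfold bcf
      rw [Bivariate.swap_monomial_monomial, coeff_monomial, coeff_monomial]
      split_ifs <;> simp [coeff_monomial, *]

lemma mon_eq {A : Type*} [CommRing A] (l k : ℕ) (a : A) :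
    (monomial k (monomial l a) : A[X][X]) = C (C a) * (C X) ^ l * X ^ k := by
  rw [← C_mul_X_pow_eq_monomial, ← C_mul_X_pow_eq_monomial, C_mul, C_pow]

lemma equiv_mon (l k : ℕ) (a : ℂ) :
    Bivariate.equivMvPolynomial ℂ (monomial k (monomial l a)) =
      MvPolynomial.monomial (Finsupp.single 0 l + Finsupp.single 1 k) a := by
  rw [mon_eq, map_mul, map_mul, map_pow, map_pow, Bivariate.equivMvPolynomial_C_C,
    Bivariate.equivMvPolynomial_C_X, Bivariate.equivMvPolynomial_X, MvPolynomial.X_pow_eq_monomial,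
    MvPolynomial.X_pow_eq_monomial, mul_assoc, MvPolynomial.monomial_mul, MvPolynomial.C_mul_monomial]
  simp

lemma equiv_coeff (ψ : ℂ[X][X]) (d : Fin 2 →₀ ℕ) :
    (Bivariate.equivMvPolynomial ℂ ψ).coeff d = bcf ψ (d 0) (d 1) := by
  classical
  induction ψ using Polynomial.induction_on' with
  | add p q hp hq =>
    unfold bcf at *
    rw [map_add, MvPolynomial.coeff_add, hp, hq, coeff_add, coeff_add]
  | monomial k p =>
    induction p using Polynomial.induction_on' with
    | add p q hp hq =>
      unfold bcf at *
      rw [map_add, map_add, MvPolynomial.coeff_add, hp, hq, coeff_add, coeff_add]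
    | monomial l a =>
      unfold bcf
      rw [equiv_mon, MvPolynomial.coeff_monomial, coeff_monomial]
      have : (Finsupp.single 0 l + Finsupp.single 1 k = d) ↔ (k = d 1 ∧ l = d 0) := by
        constructor
        · rintro rfl; simp
        · rintro ⟨h1, h2⟩
          ext i
          fin_cases i <;> simp [h1, h2]
      by_cases h1 : k = d 1
      · rw [if_pos h1, coeff_monomial]
        by_cases h2 : l = d 0
        · rw [if_pos h2, if_pos (this.2 ⟨h1, h2⟩)]
        · rw [if_neg h2, if_neg (fun h => h2 (this.1 h).2)]
      · rw [if_neg h1, if_neg (fun h => h1 (this.1 h).1), coeff_zero]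

lemma aeval_equiv (x y : RatFunc ℂ) (ψ : ℂ[X][X]) :
    MvPolynomial.aeval ![x, y] (Bivariate.equivMvPolynomial ℂ ψ) = evK x y ψ := by
  induction ψ using Polynomial.induction_on' with
  | add p q hp hq => rw [map_add, map_add, map_add, hp, hq]
  | monomial k p =>
    induction p using Polynomial.induction_on' with
    | add p q hp hq => rw [map_add, map_add, map_add, map_add, hp, hq]
    | monomial l a =>
      rw [evK_mon, mon_eq]
      simp only [map_mul, map_pow, Bivariate.equivMvPolynomial_C_C,
        Bivariate.equivMvPolynomial_C_X, Bivariate.equivMvPolynomial_X,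
        MvPolynomial.aeval_X, MvPolynomial.aeval_C]
      rfl

lemma evK_swap (x y : RatFunc ℂ) (ψ : ℂ[X][X]) :
    evK x y (Bivariate.swap (R := ℂ) ψ) = evK y x ψ := by
  induction ψ using Polynomial.induction_on' with
  | add p q hp hq => rw [map_add, map_add, map_add, hp, hq]
  | monomial k p =>
    induction p using Polynomial.induction_on' with
    | add p q hp hq => rw [map_add, map_add, map_add, map_add, hp, hq]
    | monomial l a =>
      rw [Bivariate.swap_monomial_monomial, evK_mon, evK_mon]
      ring

lemma q_ne (p q : ℂ[X]) (n : ℕ) (hn : n ≠ 0) (hA : ∀ t, p.eval t = 0 → q.eval t = 0 → False)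
    (hd : (q - p).natDegree = n) : q ≠ 0 := by
  rintro rfl
  rw [zero_sub, natDegree_neg] at hd
  obtain ⟨t, ht⟩ := IsAlgClosed.exists_root p (fun h => hn (hd ▸ natDegree_eq_of_degree_eq_some h))
  exact hA t ht (by simp)

lemma natDegree_WB {H : ℕ} {p : ℂ[X][X]} (h : WB 0 1 H p) : p.natDegree ≤ H := by
  rw [natDegree_le_iff_coeff_eq_zero]
  intro N hN
  ext i
  by_contra hc
  have := h i N hc
  simp only [zero_mul, one_mul, zero_add] at this
  omega

lemma natDegree_Rz (p0 q0 p1 q1 : ℂ[X]) (n m : ℕ)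
    (hq0 : q0.natDegree ≤ n) (hq1 : q1.natDegree ≤ m) :
    WB 0 1 n (Rz p0 q0 p1 q1 n m) ∧ WB 1 0 m (Rz p0 q0 p1 q1 n m) := by
  have e : ∀ (q : ℂ[X]) (n : ℕ), q.natDegree ≤ n → ∀ k, q.coeff k ≠ 0 → 0 ≤ k ∧ k + 0 ≤ n := by
    intro q n hq k hk
    exact ⟨Nat.zero_le _, (le_natDegree_of_ne_zero hk).trans hq⟩
  constructor
  · refine (WB.Rz (w0 := 0) (w1 := 1) le_rfl zero_le_one (Side.triv le_rfl zero_le_one 0 0 n m)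
      (Side.triv le_rfl zero_le_one 0 0 n m) p0 q0 p1 q1 (by omega) (by omega) (e _ _ hq0) (e _ _ hq1)).mono ?_
    simp
  · refine (WB.Rz (w0 := 1) (w1 := 0) zero_le_one le_rfl (Side.triv zero_le_one le_rfl 0 0 n m)
      (Side.triv zero_le_one le_rfl 0 0 n m) p0 q0 p1 q1 (by omega) (by omega) (e _ _ hq0) (e _ _ hq1)).mono ?_
    simp

lemma bcf_mul_const (ψ : ℂ[X][X]) (κ : ℂ) (i j : ℕ) : bcf (ψ * C (C κ)) i j = κ * bcf ψ i j := by
  unfold bcf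
  rw [coeff_mul_C, coeff_mul_C, mul_comm]

theorem implicit_eq (p0 q0 p1 q1 : ℂ[X]) (n m : ℕ) (hn : n ≠ 0) (hm : m ≠ 0)
    (hp0 : p0.natDegree ≤ n) (hq0 : q0.natDegree ≤ n) (hp1 : p1.natDegree ≤ m) (hq1 : q1.natDegree ≤ m)
    (A0 : ∀ t, p0.eval t = 0 → q0.eval t = 0 → False)
    (A1 : ∀ t, p1.eval t = 0 → q1.eval t = 0 → False)
    (B0 : (q0 - p0).natDegree = n ∧ ∃ T : Finset ℂ, T.card = n ∧ ∀ y ∈ T, ∃ a, (q0 - p0).eval a = 0 ∧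
        q1.eval a ≠ 0 ∧ y * q1.eval a = p1.eval a)
    (B1 : (q1 - p1).natDegree = m ∧ ∃ T : Finset ℂ, T.card = m ∧ ∀ y ∈ T, ∃ a, (q1 - p1).eval a = 0 ∧
        q0.eval a ≠ 0 ∧ y * q0.eval a = p0.eval a)
    (hR : Rz p0 q0 p1 q1 n m ≠ 0) (φ : MvPolynomial (Fin 2) ℂ) (hφ : Irreducible φ)
    (hv : MvPolynomial.aeval ![algebraMap ℂ[X] (RatFunc ℂ) p0 / algebraMap ℂ[X] (RatFunc ℂ) q0,
      algebraMap ℂ[X] (RatFunc ℂ) p1 / algebraMap ℂ[X] (RatFunc ℂ) q1] φ = 0) :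
    ∀ d, bcf (Rz p0 q0 p1 q1 n m) (d 0) (d 1) ≠ 0 ↔ d ∈ φ.support := by
  obtain ⟨hd0, T0, hT0, hT0'⟩ := B0
  obtain ⟨hd1, T1, hT1, hT1'⟩ := B1
  have hq0n := q_ne p0 q0 n hn A0 hd0
  have hq1n := q_ne p1 q1 m hm A1 hd1
  obtain ⟨ψ, rfl⟩ := (Bivariate.equivMvPolynomial ℂ).surjective φ
  rw [aeval_equiv] at hv
  have hψ : Irreducible ψ := (MulEquiv.irreducible_iff (Bivariate.equivMvPolynomial ℂ)).1 hφ
  have hψs : Irreducible (Bivariate.swap (R := ℂ) ψ) :=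
    (MulEquiv.irreducible_iff (Bivariate.swap (R := ℂ))).2 hψ
  have hne0 : q0 ≠ p0 := by
    intro h; rw [h, sub_self, natDegree_zero] at hd0; exact hn hd0.symm
  have hne1 : q1 ≠ p1 := by
    intro h; rw [h, sub_self, natDegree_zero] at hd1; exact hm hd1.symm
  have l0 := natDegree_lower p0 q0 p1 q1 ψ hq0n hq1n hψ hv hne0 A0 T0 hT0'
  have l1 := natDegree_lower p1 q1 p0 q0 (Bivariate.swap (R := ℂ) ψ) hq1n hq0n hψs
    (by rw [evK_swap]; exact hv) hne1 A1 T1 hT1'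
  rw [hT0] at l0
  rw [hT1] at l1
  have hinj := not_alg p0 q0 hq0n (by omega) A0
  obtain ⟨s, hs⟩ := dvd_of_vanish _ _ hinj ψ (Rz p0 q0 p1 q1 n m) hψ (by omega) hv
    (Rz_vanish p0 q0 p1 q1 hq0n hq1n n m hn hp0 hq0 hp1 hq1)
  obtain ⟨w1, w2⟩ := natDegree_Rz p0 q0 p1 q1 n m hq0 hq1
  have u1 := natDegree_WB w1
  have u2 : (Bivariate.swap (R := ℂ) (Rz p0 q0 p1 q1 n m)).natDegree ≤ m := by
    refine natDegree_WB ?_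
    intro i j hij
    rw [bcf_swap] at hij
    have := w2 j i hij
    linarith
  rw [hs] at hR u1 u2
  have hψ0 := left_ne_zero_of_mul hR
  have hs0 := right_ne_zero_of_mul hR
  rw [natDegree_mul hψ0 hs0] at u1
  rw [map_mul, natDegree_mul hψs.ne_zero (by
    intro h; exact hs0 ((Bivariate.swap (R := ℂ)).injective (by rw [h, map_zero])))] at u2
  have v1 : s.natDegree = 0 := by omega
  have v2 : (Bivariate.swap (R := ℂ) s).natDegree = 0 := by omega
  obtain ⟨r, rfl⟩ := natDegree_eq_zero.1 v1
  have v3 : r.natDegree = 0 := by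
    rw [natDegree_eq_zero_iff_degree_le_zero, degree_le_iff_coeff_zero]
    intro N hN
    have hN : 0 < N := by exact_mod_cast hN
    have e : bcf (Bivariate.swap (R := ℂ) (C r)) 0 N = 0 := by
      have h0 : (Bivariate.swap (R := ℂ) (C r)).coeff N = 0 := coeff_eq_zero_of_natDegree_lt (by omega)
      unfold bcf
      rw [h0, coeff_zero]
    rw [bcf_swap] at e
    unfold bcf at e
    rwa [coeff_C_zero] at e
  obtain ⟨κ, rfl⟩ := natDegree_eq_zero.1 v3
  have hκ : κ ≠ 0 := by
    rintro rfl; simp at hs0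
  intro d
  rw [MvPolynomial.mem_support_iff, equiv_coeff, hs, bcf_mul_const]
  simp [hκ]

lemma hull_le {S : Set (ℝ × ℝ)} {a b H : ℝ} (h : ∀ s ∈ S, a * s.1 + b * s.2 ≤ H) :
    ∀ s ∈ convexHull ℝ S, a * s.1 + b * s.2 ≤ H := by
  have hc : Convex ℝ {s : ℝ × ℝ | a * s.1 + b * s.2 ≤ H} := by
    intro x hx y hy s t hs ht hst
    simp only [Set.mem_ofPred_eq, Prod.fst_add, Prod.snd_add, Prod.smul_fst, Prod.smul_snd, smul_eq_mul] at *
    have h1 := mul_le_mul_of_nonneg_left hx hs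
    have h2 := mul_le_mul_of_nonneg_left hy ht
    have h3 : s * H + t * H = H := by rw [← add_mul, hst, one_mul]
    linarith
  exact fun s hs => convexHull_min h hc hs

lemma eq_of_seg {fx fy H s t : ℝ} (hx : fx ≤ H) (hy : fy ≤ H) (hs : 0 < s) (ht : 0 < t) (hst : s + t = 1)
    (h : s * fx + t * fy = H) : fx = H := by
  have h2 := mul_le_mul_of_nonneg_left hy ht.le
  have h3 : s * H + t * H = H := by rw [← add_mul, hst, one_mul]
  have : H ≤ fx := by
    by_contra hc
    push Not at hc
    have := mul_lt_mul_of_pos_left hc hs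
    linarith
  exact le_antisymm hx this

lemma extreme_of {S : Set (ℝ × ℝ)} {v : ℝ × ℝ} (hv : v ∈ S) {a b a' b' : ℝ}
    (h : ∀ s ∈ S, a * s.1 + b * s.2 ≤ a * v.1 + b * v.2)
    (h' : ∀ s ∈ S, a' * s.1 + b' * s.2 ≤ a' * v.1 + b' * v.2) (hd : a * b' - b * a' ≠ 0) :
    v ∈ Set.extremePoints ℝ (convexHull ℝ S) := by
  refine ⟨subset_convexHull ℝ S hv, ?_⟩
  rintro x hx y hy ⟨s, t, hs, ht, hst, hxy⟩
  have e1 : s * x.1 + t * y.1 = v.1 := by rw [← hxy]; simp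
  have e2 : s * x.2 + t * y.2 = v.2 := by rw [← hxy]; simp
  have f1 := eq_of_seg (hull_le h x hx) (hull_le h y hy) hs ht hst
    (by rw [← e1, ← e2]; ring)
  have f2 := eq_of_seg (hull_le h' x hx) (hull_le h' y hy) hs ht hst
    (by rw [← e1, ← e2]; ring)
  have g1 : (a * b' - b * a') * (x.1 - v.1) = 0 := by linear_combination b' * f1 - b * f2
  have g2 : (a * b' - b * a') * (x.2 - v.2) = 0 := by linear_combination a * f2 - a' * f1
  exact Prod.ext (by linarith [(mul_eq_zero.1 g1).resolve_left hd])
    (by linarith [(mul_eq_zero.1 g2).resolve_left hd])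

lemma segment_of {S : Set (ℝ × ℝ)} {u v : ℝ × ℝ} (hu : u ∈ S) (hv : v ∈ S) {a b H : ℝ}
    (h : ∀ s ∈ S, a * s.1 + b * s.2 ≤ H) (eu : a * u.1 + b * u.2 = H) (ev : a * v.1 + b * v.2 = H)
    (hab : 0 < a * a + b * b) :
    segment ℝ u v ⊆ frontier (convexHull ℝ S) := by
  intro z hz
  have hzc : z ∈ convexHull ℝ S :=
    (convex_convexHull ℝ S).segment_subset (subset_convexHull ℝ S hu) (subset_convexHull ℝ S hv) hz
  refine ⟨subset_closure hzc, ?_⟩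
  intro hzint
  obtain ⟨s, t, hs, ht, hst, hxy⟩ := hz
  have ez : a * z.1 + b * z.2 = H := by
    rw [← hxy]
    simp only [Prod.fst_add, Prod.snd_add, Prod.smul_fst, Prod.smul_snd, smul_eq_mul]
    linear_combination s * eu + t * ev + H * hst
  have hcont : Continuous (fun r : ℝ => ((z.1 + r * a, z.2 + r * b) : ℝ × ℝ)) := by fun_prop
  have hmem : (fun r : ℝ => ((z.1 + r * a, z.2 + r * b) : ℝ × ℝ)) ⁻¹' (interior (convexHull ℝ S)) ∈ nhds (0 : ℝ) := by
    refine hcont.continuousAt.preimage_mem_nhds ?_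
    simpa using isOpen_interior.mem_nhds hzint
  obtain ⟨ε, hε, hb⟩ := Metric.mem_nhds_iff.1 hmem
  have h1 : ε / 2 ∈ Metric.ball (0 : ℝ) ε := by
    rw [Metric.mem_ball, dist_zero_right, Real.norm_eq_abs, abs_of_pos (by linarith)]
    linarith
  have h2 := hull_le h _ (interior_subset (hb h1))
  simp only at h2
  have := mul_pos (half_pos hε) hab
  nlinarith

lemma newton_mem {R : ℂ[X][X]} {φ : MvPolynomial (Fin 2) ℂ}
    (hs : ∀ d : Fin 2 →₀ ℕ, bcf R (d 0) (d 1) ≠ 0 ↔ d ∈ φ.support) {i j : ℕ} (h : bcf R i j ≠ 0) :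
    ((i : ℝ), (j : ℝ)) ∈ ((fun d : Fin 2 →₀ ℕ => ((d 0 : ℝ), (d 1 : ℝ))) '' (φ.support : Set (Fin 2 →₀ ℕ))) := by
  refine ⟨Finsupp.single 0 i + Finsupp.single 1 j, ?_, ?_⟩
  · rw [Finset.mem_coe, ← hs]
    simpa using h
  · simp

lemma newton_le {R : ℂ[X][X]} {φ : MvPolynomial (Fin 2) ℂ}
    (hs : ∀ d : Fin 2 →₀ ℕ, bcf R (d 0) (d 1) ≠ 0 ↔ d ∈ φ.support) {w0 w1 H : ℤ} (h : WB w0 w1 H R) :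
    ∀ s ∈ ((fun d : Fin 2 →₀ ℕ => ((d 0 : ℝ), (d 1 : ℝ))) '' (φ.support : Set (Fin 2 →₀ ℕ))),
      (w0 : ℝ) * s.1 + (w1 : ℝ) * s.2 ≤ (H : ℝ) := by
  rintro _ ⟨d, hd, rfl⟩
  have := h (d 0) (d 1) ((hs d).2 hd)
  simp only
  exact_mod_cast this

lemma newton_extreme {R : ℂ[X][X]} {φ : MvPolynomial (Fin 2) ℂ}
    (hs : ∀ d : Fin 2 →₀ ℕ, bcf R (d 0) (d 1) ≠ 0 ↔ d ∈ φ.support) {w0 w1 H w0' w1' H' : ℤ}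
    (h : WB w0 w1 H R) (h' : WB w0' w1' H' R) {i j : ℕ} (hij : bcf R i j ≠ 0)
    (e : w0 * i + w1 * j = H) (e' : w0' * i + w1' * j = H') (hd : w0 * w1' - w1 * w0' ≠ 0) :
    ((i : ℝ), (j : ℝ)) ∈ Set.extremePoints ℝ (newtonPolygon φ) := by
  have e1 : (H : ℝ) = w0 * i + w1 * j := by exact_mod_cast e.symm
  have e2 : (H' : ℝ) = w0' * i + w1' * j := by exact_mod_cast e'.symm
  have k1 := newton_le hs h
  have k2 := newton_le hs h'
  rw [e1] at k1
  rw [e2] at k2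
  exact extreme_of (newton_mem hs hij) k1 k2 (by exact_mod_cast hd)

lemma newton_segment {R : ℂ[X][X]} {φ : MvPolynomial (Fin 2) ℂ}
    (hs : ∀ d : Fin 2 →₀ ℕ, bcf R (d 0) (d 1) ≠ 0 ↔ d ∈ φ.support) {w0 w1 H : ℤ}
    (h : WB w0 w1 H R) {i j i' j' : ℕ} (hij : bcf R i j ≠ 0) (hij' : bcf R i' j' ≠ 0)
    (e : w0 * i + w1 * j = H) (e' : w0 * i' + w1 * j' = H) (hd : 0 < w0 * w0 + w1 * w1) :
    segment ℝ ((i : ℝ), (j : ℝ)) ((i' : ℝ), (j' : ℝ)) ⊆ frontier (newtonPolygon φ) := by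
  refine segment_of (newton_mem hs hij) (newton_mem hs hij') (newton_le hs h) ?_ ?_ ?_
  · simp only
    exact_mod_cast e
  · simp only
    exact_mod_cast e'
  · exact_mod_cast hd

lemma Gen_V1 (SS : Fin 4 → Finset ℕ) {i0 i1 i2 i3 : Fin 4} (hd : [i0, i1, i2, i3].Nodup) (n m : ℕ)
    (hne : (SS i1).Nonempty) (hne3 : (SS i3).Nonempty)
    (h0 : 0 ∈ SS i0 ∪ SS i1) (hn : n ∈ SS i0 ∪ SS i1)
    (hmax : ∀ s ∈ SS i0 ∪ SS i1, s ≤ n) (hmax1 : ∀ s ∈ SS i3, s ≤ m)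
    (hnot : ¬ (0 ∈ SS i1 ∧ n ∈ SS i1)) :
    Gen SS (fun co => bcf (Rz (pl SS co i0) (pl SS co i1) (pl SS co i2) (pl SS co i3) n m)
      (((SS i3).max' hne3 - (SS i3).min' hne3) + (if 0 ∈ SS i1 then (SS i3).min' hne3 else 0) +
        (if n ∈ SS i1 then m - (SS i3).max' hne3 else 0)) n ≠ 0) := by
  classical
  obtain ⟨r, hr, hr0, hrn⟩ : ∃ r ∈ SS i1, (r = 0 ↔ 0 ∈ SS i1) ∧ (r = n ↔ n ∈ SS i1) := by
    by_cases h1 : 0 ∈ SS i1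
    · have h2 : n ∉ SS i1 := fun h => hnot ⟨h1, h⟩
      refine ⟨0, h1, by simp [h1], ?_⟩
      simp only [h2, iff_false]
      rintro rfl
      exact h2 h1
    · by_cases h2 : n ∈ SS i1
      · refine ⟨n, h2, ?_, by simp [h2]⟩
        simp only [h1, iff_false]
        rintro rfl
        exact h1 h2
      · obtain ⟨r, hr⟩ := hne
        refine ⟨r, hr, ?_, ?_⟩
        · simp only [h1, iff_false]; rintro rfl; exact h1 hr
        · simp only [h2, iff_false]; rintro rfl; exact h2 hr
  set L1 := (SS i3).min' hne3 with hL1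
  set R1 := (SS i3).max' hne3 with hR1
  have hLm : L1 ∈ SS i3 := Finset.min'_mem _ _
  have hRm : R1 ∈ SS i3 := Finset.max'_mem _ _
  have hLR : L1 ≤ R1 := Finset.min'_le _ _ hRm
  have hRm' := hmax1 R1 hRm
  set u := ones ((SS i3).image (fun s => s - L1)) with hu
  have hdeg : u.natDegree ≤ R1 - L1 := by
    apply ones_natDegree
    intro s hs
    obtain ⟨t, ht, rfl⟩ := Finset.mem_image.1 hs
    have := Finset.le_max' _ _ ht
    omega
  have hlead : u.coeff (R1 - L1) = 1 := by
    rw [hu, ones_coeff, if_pos (Finset.mem_image.2 ⟨R1, hRm, rfl⟩)]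
  have hmon : u.Monic := monic_of_natDegree_le_of_coeff_eq_one _ hdeg hlead
  have hdeg' : u.natDegree = R1 - L1 :=
    le_antisymm hdeg (le_natDegree_of_ne_zero (by rw [hlead]; exact one_ne_zero))
  have hu0 : u.coeff 0 ≠ 0 := by
    rw [hu, ones_coeff, if_pos (Finset.mem_image.2 ⟨L1, hLm, by simp⟩)]
    exact one_ne_zero
  have hfac : X ^ L1 * u = ones (SS i3) := by
    rw [hu]
    unfold ones
    rw [Finset.sum_image, Finset.mul_sum]
    · refine Finset.sum_congr rfl fun s hs => ?_
      rw [← pow_add]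
      congr 1
      have := Finset.min'_le _ _ hs
      omega
    · intro s hs t ht h
      have h1 := Finset.min'_le _ _ hs
      have h2 := Finset.min'_le _ _ ht
      simp only at h
      omega
  refine Gen_bcf SS hd n m _ n (ones (SS i0)) (X ^ r) 0 (ones (SS i3)) (ones_supp _) (X_pow_supp hr)
    (by simp) (ones_supp _) ?_
  have hcoef : ∀ k, k ∈ SS i0 ∪ SS i1 → k ∉ SS i1 → (ones (SS i0)).coeff k ≠ 0 := by
    intro k hk hk1
    rw [ones_coeff, if_pos ((Finset.mem_union.1 hk).resolve_right hk1)]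
    exact one_ne_zero
  have := V1 (ones (SS i0)) u n m r L1 (m - R1) (ones_natDegree fun s hs => hmax s (Finset.mem_union_left _ hs))
    (hmax r (Finset.mem_union_right _ hr)) hmon hu0 (by omega)
    (by
      by_cases h : r = 0
      · exact Or.inl h
      · exact Or.inr (hcoef 0 h0 (fun h' => h (hr0.2 h'))))
    (by
      by_cases h : r = n
      · exact Or.inl h
      · exact Or.inr (hcoef n hn (fun h' => h (hrn.2 h'))))
  rw [hfac, hdeg'] at this
  simp only [hr0, hrn] at this
  exact this

lemma Gen_V2 (SS : Fin 4 → Finset ℕ) {i0 i1 i2 i3 : Fin 4} (hd : [i0, i1, i2, i3].Nodup) (n m L0 R1 : ℕ)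
    (hn : n ∈ SS i0) (h0 : 0 ∈ SS i2) (hL : L0 ∈ SS i1) (hR : R1 ∈ SS i3) (hLn : L0 < n) (hR0 : 0 < R1)
    (hRm : R1 ≤ m) :
    Gen SS (fun co => bcf (Rz (pl SS co i0) (pl SS co i1) (pl SS co i2) (pl SS co i3) n m)
      R1 (n - L0) ≠ 0) := by
  refine Gen_bcf SS hd n m _ _ (-X ^ n) (X ^ L0) (-1) (X ^ R1) ?_ (X_pow_supp hL)
    ?_ (X_pow_supp hR) (V2 n m L0 (n - L0) R1 (m - R1) (by omega) (by omega) (by omega) hR0)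
  · intro k hk
    exact X_pow_supp hn k (by simpa using hk)
  · intro k hk
    refine X_pow_supp h0 k ?_
    rw [pow_zero]
    simpa using hk

/-- index-swapped version -/
lemma Gen_swap {SS : Fin 4 → Finset ℕ} {i0 i1 i2 i3 : Fin 4} {n m i j : ℕ}
    (h : Gen SS (fun co => bcf (Rz (pl SS co i2) (pl SS co i3) (pl SS co i0) (pl SS co i1) m n) j i ≠ 0)) :
    Gen SS (fun co => bcf (Rz (pl SS co i0) (pl SS co i1) (pl SS co i2) (pl SS co i3) n m) i j ≠ 0) := by
  refine h.mono fun c hc => ?_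
  rw [Rz_swap]
  exact mul_ne_zero (pow_ne_zero _ (by norm_num)) hc

section geo
variable {L0 d0 M0 L1 d1 M1 n m F F' : ℕ} {p0 q0 p1 q1 : ℂ[X]} {φ : MvPolynomial (Fin 2) ℂ}

/-- the common hypotheses -/
structure GeoHyp (L0 d0 M0 L1 d1 M1 n m F F' : ℕ) (p0 q0 p1 q1 : ℂ[X])
    (φ : MvPolynomial (Fin 2) ℂ) : Prop where
  en : n = L0 + d0 + M0
  em : m = L1 + d1 + M1
  b0 : ∀ k, q0.coeff k ≠ 0 → L0 ≤ k ∧ k + M0 ≤ n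
  b1 : ∀ k, q1.coeff k ≠ 0 → L1 ≤ k ∧ k + M1 ≤ m
  hs : ∀ d : Fin 2 →₀ ℕ, bcf (Rz p0 q0 p1 q1 n m) (d 0) (d 1) ≠ 0 ↔ d ∈ φ.support
  v : bcf (Rz p0 q0 p1 q1 n m) m F ≠ 0
  v' : bcf (Rz p0 q0 p1 q1 n m) F' n ≠ 0

lemma GeoHyp.wb (g : GeoHyp L0 d0 M0 L1 d1 M1 n m F F' p0 q0 p1 q1 φ) :
    WB 0 1 n (Rz p0 q0 p1 q1 n m) ∧ WB 1 0 m (Rz p0 q0 p1 q1 n m) := by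
  apply natDegree_Rz
  · rw [natDegree_le_iff_coeff_eq_zero]
    intro N hN
    by_contra h
    have := (g.b0 N h).2
    omega
  · rw [natDegree_le_iff_coeff_eq_zero]
    intro N hN
    by_contra h
    have := (g.b1 N h).2
    omega

lemma GeoHyp.ext1 (g : GeoHyp L0 d0 M0 L1 d1 M1 n m F F' p0 q0 p1 q1 φ) {w0 w1 H : ℤ}
    (h : WB w0 w1 H (Rz p0 q0 p1 q1 n m)) (e : w0 * m + w1 * F = H) (hw : 0 < w1) :
    ((m : ℝ), (F : ℝ)) ∈ Set.extremePoints ℝ (newtonPolygon φ) := by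
  refine newton_extreme g.hs g.wb.2 h g.v (by ring) e ?_
  have := hw.ne'
  simpa using this

lemma GeoHyp.ext2 (g : GeoHyp L0 d0 M0 L1 d1 M1 n m F F' p0 q0 p1 q1 φ) {w0 w1 H : ℤ}
    (h : WB w0 w1 H (Rz p0 q0 p1 q1 n m)) (e : w0 * F' + w1 * n = H) (hw : 0 < w0) :
    ((F' : ℝ), (n : ℝ)) ∈ Set.extremePoints ℝ (newtonPolygon φ) := by
  refine newton_extreme g.hs g.wb.1 h g.v' (by ring) e ?_
  have := hw.ne'
  simpa using this

lemma GeoHyp.single (g : GeoHyp L0 d0 M0 L1 d1 M1 n m F F' p0 q0 p1 q1 φ) {w0 w1 H : ℤ}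
    (h : WB w0 w1 H (Rz p0 q0 p1 q1 n m)) (e : w0 * m + w1 * F = H) (e' : w0 * F' + w1 * n = H)
    (hw0 : 0 < w0) (hw1 : 0 < w1) :
    ((m : ℝ), (F : ℝ)) ∈ Set.extremePoints ℝ (newtonPolygon φ) ∧
    ((F' : ℝ), (n : ℝ)) ∈ Set.extremePoints ℝ (newtonPolygon φ) ∧
    segment ℝ ((m : ℝ), (F : ℝ)) ((F' : ℝ), (n : ℝ)) ⊆ frontier (newtonPolygon φ) :=
  ⟨g.ext1 h e hw1, g.ext2 h e' hw0, newton_segment g.hs h g.v g.v' e e' (by positivity)⟩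

lemma GeoHyp.double (g : GeoHyp L0 d0 M0 L1 d1 M1 n m F F' p0 q0 p1 q1 φ) {w0 w1 H w0' w1' H' : ℤ}
    (h : WB w0 w1 H (Rz p0 q0 p1 q1 n m)) (h' : WB w0' w1' H' (Rz p0 q0 p1 q1 n m)) {i j : ℕ}
    (hij : bcf (Rz p0 q0 p1 q1 n m) i j ≠ 0)
    (e : w0 * m + w1 * F = H) (e1 : w0 * i + w1 * j = H)
    (e' : w0' * F' + w1' * n = H') (e1' : w0' * i + w1' * j = H')
    (hw0 : 0 < w0) (hw1 : 0 < w1) (hw0' : 0 < w0') (hw1' : 0 < w1') (hd : w0 * w1' - w1 * w0' ≠ 0) :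
    ((m : ℝ), (F : ℝ)) ∈ Set.extremePoints ℝ (newtonPolygon φ) ∧
    ((F' : ℝ), (n : ℝ)) ∈ Set.extremePoints ℝ (newtonPolygon φ) ∧
    ((i : ℝ), (j : ℝ)) ∈ Set.extremePoints ℝ (newtonPolygon φ) ∧
    segment ℝ ((m : ℝ), (F : ℝ)) ((i : ℝ), (j : ℝ)) ⊆ frontier (newtonPolygon φ) ∧
    segment ℝ ((i : ℝ), (j : ℝ)) ((F' : ℝ), (n : ℝ)) ⊆ frontier (newtonPolygon φ) :=
  ⟨g.ext1 h e hw1, g.ext2 h' e' hw0', newton_extreme g.hs h h' hij e1 e1' hd,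
    newton_segment g.hs h g.v hij e e1 (by positivity),
    newton_segment g.hs h' hij g.v' e1' e' (by positivity)⟩

lemma GeoHyp.c0 (g : GeoHyp L0 d0 M0 L1 d1 M1 n m F F' p0 q0 p1 q1 φ) (hL0 : 0 < L0) (hL1 : 0 < L1)
    (hF : F = d0 + M0) (hF' : F' = d1 + M1) :
    ((m : ℝ), (F : ℝ)) ∈ Set.extremePoints ℝ (newtonPolygon φ) ∧
    ((F' : ℝ), (n : ℝ)) ∈ Set.extremePoints ℝ (newtonPolygon φ) ∧
    segment ℝ ((m : ℝ), (F : ℝ)) ((F' : ℝ), (n : ℝ)) ⊆ frontier (newtonPolygon φ) := by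
  have en := g.en
  have em := g.em
  have h := WB.Rz (w0 := L0) (w1 := L1) (by positivity) (by positivity)
    (Side.left (by positivity) 1 zero_le_one L0 L1 n m (by ring) (by simp) (by omega))
    (Side.triv (by positivity) (by positivity) M0 M1 n m) p0 q0 p1 q1 (by omega) (by omega) g.b0 g.b1
  refine g.single h ?_ ?_ (by exact_mod_cast hL0) (by exact_mod_cast hL1)
  · subst hF; rw [en]; push_cast; ring
  · subst hF'; rw [em]; push_cast; ring

lemma GeoHyp.c1 (g : GeoHyp L0 d0 M0 L1 d1 M1 n m F F' p0 q0 p1 q1 φ) (hM0 : 0 < M0) (hM1 : 0 < M1)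
    (hF : F = d0 + L0) (hF' : F' = d1 + L1) :
    ((m : ℝ), (F : ℝ)) ∈ Set.extremePoints ℝ (newtonPolygon φ) ∧
    ((F' : ℝ), (n : ℝ)) ∈ Set.extremePoints ℝ (newtonPolygon φ) ∧
    segment ℝ ((m : ℝ), (F : ℝ)) ((F' : ℝ), (n : ℝ)) ⊆ frontier (newtonPolygon φ) := by
  have en := g.en
  have em := g.em
  have h := WB.Rz (w0 := M0) (w1 := M1) (by positivity) (by positivity)
    (Side.triv (by positivity) (by positivity) L0 L1 n m)
    (Side.left (by positivity) 1 zero_le_one M0 M1 n m (by ring) (by simp) (by omega))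
    p0 q0 p1 q1 (by omega) (by omega) g.b0 g.b1
  refine g.single h ?_ ?_ (by exact_mod_cast hM0) (by exact_mod_cast hM1)
  · subst hF; rw [en]; push_cast; ring
  · subst hF'; rw [em]; push_cast; ring

lemma GeoHyp.wneg (g : GeoHyp L0 d0 M0 L1 d1 M1 n m F F' p0 q0 p1 q1 φ)
    (hδ : (M0 : ℤ) * L1 ≤ L0 * M1) :
    WB (M0 * L0) (M0 * L1) (m * (M0 * L0) + n * (M0 * L1) - (M0 * L1) * L0 - (M0 * L1) * M0)
      (Rz p0 q0 p1 q1 n m) := by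
  have en := g.en
  have em := g.em
  exact WB.Rz (by positivity) (by positivity)
    (Side.left (by positivity) M0 (by positivity) L0 L1 n m rfl le_rfl (by omega))
    (Side.left (by positivity) L0 (by positivity) M0 M1 n m (mul_comm _ _) hδ (by omega))
    p0 q0 p1 q1 (by omega) (by omega) g.b0 g.b1

lemma GeoHyp.both0 (g : GeoHyp L0 d0 M0 L1 d1 M1 n m F F' p0 q0 p1 q1 φ)
    (hL0 : 0 < L0) (hL1 : 0 < L1) (hM0 : 0 < M0) (hM1 : 0 < M1)
    (hF : F = d0) (hF' : F' = d1) (hδ : (M0 : ℤ) * L1 = L0 * M1) :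
    ((m : ℝ), (F : ℝ)) ∈ Set.extremePoints ℝ (newtonPolygon φ) ∧
    ((F' : ℝ), (n : ℝ)) ∈ Set.extremePoints ℝ (newtonPolygon φ) ∧
    segment ℝ ((m : ℝ), (F : ℝ)) ((F' : ℝ), (n : ℝ)) ⊆ frontier (newtonPolygon φ) := by
  refine g.single (g.wneg hδ.le) ?_ ?_ (by positivity) (by positivity)
  · rw [g.en, hF]; push_cast; ring
  · rw [g.em, hF']; push_cast; linear_combination (M0 : ℤ) * hδ

lemma GeoHyp.bothneg (g : GeoHyp L0 d0 M0 L1 d1 M1 n m F F' p0 q0 p1 q1 φ)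
    (hL0 : 0 < L0) (hL1 : 0 < L1) (hM0 : 0 < M0) (hM1 : 0 < M1)
    (hF : F = d0) (hF' : F' = d1) (hδ : (M0 : ℤ) * L1 < L0 * M1) {i j : ℕ} (hi : i = d1 + M1) (hj : j = L0 + d0)
    (hij : bcf (Rz p0 q0 p1 q1 n m) i j ≠ 0) :
    ((m : ℝ), (F : ℝ)) ∈ Set.extremePoints ℝ (newtonPolygon φ) ∧
    ((F' : ℝ), (n : ℝ)) ∈ Set.extremePoints ℝ (newtonPolygon φ) ∧
    ((i : ℝ), (j : ℝ)) ∈ Set.extremePoints ℝ (newtonPolygon φ) ∧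
    segment ℝ ((m : ℝ), (F : ℝ)) ((i : ℝ), (j : ℝ)) ⊆ frontier (newtonPolygon φ) ∧
    segment ℝ ((i : ℝ), (j : ℝ)) ((F' : ℝ), (n : ℝ)) ⊆ frontier (newtonPolygon φ) := by
  have en := g.en
  have em := g.em
  have h' := WB.Rz (w0 := M0 * L1) (w1 := M1 * L1) (by positivity) (by positivity)
    (Side.right (by positivity) M1 (by positivity) L0 L1 n m rfl (by linarith) (by omega))
    (Side.left (by positivity) L1 (by positivity) M0 M1 n m (mul_comm _ _) (mul_comm _ _).le (by omega))
    p0 q0 p1 q1 (by omega) (by omega) g.b0 g.b1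
  refine g.double (g.wneg hδ.le) h' hij ?_ ?_ ?_ ?_ (by positivity) (by positivity) (by positivity)
    (by positivity) ?_
  · rw [en, hF]; push_cast; ring
  · rw [em, en, hi, hj]; push_cast; ring
  · rw [em, hF']; push_cast; ring
  · rw [em, en, hi, hj]; push_cast; ring
  · have : (M0 : ℤ) * L0 * (M1 * L1) - M0 * L1 * (M0 * L1) = M0 * L1 * (L0 * M1 - M0 * L1) := by ring
    rw [this]
    have h2 : (0 : ℤ) < L0 * M1 - M0 * L1 := by linarith
    positivity

lemma GeoHyp.bothpos (g : GeoHyp L0 d0 M0 L1 d1 M1 n m F F' p0 q0 p1 q1 φ)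
    (hL0 : 0 < L0) (hL1 : 0 < L1) (hM0 : 0 < M0) (hM1 : 0 < M1)
    (hF : F = d0) (hF' : F' = d1) (hδ : (L0 : ℤ) * M1 < M0 * L1) {i j : ℕ} (hi : i = L1 + d1) (hj : j = d0 + M0)
    (hij : bcf (Rz p0 q0 p1 q1 n m) i j ≠ 0) :
    ((m : ℝ), (F : ℝ)) ∈ Set.extremePoints ℝ (newtonPolygon φ) ∧
    ((F' : ℝ), (n : ℝ)) ∈ Set.extremePoints ℝ (newtonPolygon φ) ∧
    ((i : ℝ), (j : ℝ)) ∈ Set.extremePoints ℝ (newtonPolygon φ) ∧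
    segment ℝ ((m : ℝ), (F : ℝ)) ((i : ℝ), (j : ℝ)) ⊆ frontier (newtonPolygon φ) ∧
    segment ℝ ((i : ℝ), (j : ℝ)) ((F' : ℝ), (n : ℝ)) ⊆ frontier (newtonPolygon φ) := by
  have en := g.en
  have em := g.em
  have h := WB.Rz (w0 := M0 * L0) (w1 := M1 * L0) (by positivity) (by positivity)
    (Side.left (by positivity) M0 (by positivity) L0 L1 n m rfl (by linarith) (by omega))
    (Side.left (by positivity) L0 (by positivity) M0 M1 n m (mul_comm _ _) (mul_comm _ _).le (by omega))
    p0 q0 p1 q1 (by omega) (by omega) g.b0 g.b1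
  have h' := WB.Rz (w0 := L0 * M1) (w1 := L1 * M1) (by positivity) (by positivity)
    (Side.right (by positivity) M1 (by positivity) L0 L1 n m (mul_comm _ _) (mul_comm _ _).le (by omega))
    (Side.right (by positivity) L1 (by positivity) M0 M1 n m rfl (by linarith) (by omega))
    p0 q0 p1 q1 (by omega) (by omega) g.b0 g.b1
  refine g.double h h' hij ?_ ?_ ?_ ?_ (by positivity) (by positivity) (by positivity)
    (by positivity) ?_
  · rw [en, hF]; push_cast; ring
  · rw [em, en, hi, hj]; push_cast; ring
  · rw [em, hF']; push_cast; ring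
  · rw [em, en, hi, hj]; push_cast; ring
  · have : (M0 : ℤ) * L0 * (L1 * M1) - M1 * L0 * (L0 * M1) = M1 * L0 * (M0 * L1 - L0 * M1) := by ring
    rw [this]
    have h2 : (0 : ℤ) < M0 * L1 - L0 * M1 := by linarith
    positivity

end geo

/-- The upper right corner of the implicit Newton polygon (different denominators).
`SS 0, SS 1, SS 2, SS 3` are the supports of `P₀, Q₀, P₁, Q₁`. -/
theorem implicit_upper_right_corner (SS : Fin 4 → Finset ℕ) (hne : ∀ i, (SS i).Nonempty)
    (h00 : 0 ∈ SS 0 ∪ SS 1) (h01 : 0 ∈ SS 2 ∪ SS 3)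
    (hgcd : ((SS 0 ∪ SS 1 ∪ SS 2 ∪ SS 3).filter (fun s => s ≠ 0)).gcd id = 1)
    (a0n a1m : ℕ)
    (ha0nmem : a0n ∈ SS 0 ∪ SS 1) (ha0nmax : ∀ s ∈ SS 0 ∪ SS 1, s ≤ a0n)
    (ha1mmem : a1m ∈ SS 2 ∪ SS 3) (ha1mmax : ∀ s ∈ SS 2 ∪ SS 3, s ≤ a1m)
    (ha0n1 : 1 ≤ a0n) (ha1m1 : 1 ≤ a1m)
    (F F' : ℕ) (δ : ℤ)
    (hF : F = ((SS 1).max' (hne 1) - (SS 1).min' (hne 1)) +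
      (if 0 ∈ SS 3 then (SS 1).min' (hne 1) else 0) +
      (if a1m ∈ SS 3 then a0n - (SS 1).max' (hne 1) else 0))
    (hF' : F' = ((SS 3).max' (hne 3) - (SS 3).min' (hne 3)) +
      (if 0 ∈ SS 1 then (SS 3).min' (hne 3) else 0) +
      (if a0n ∈ SS 1 then a1m - (SS 3).max' (hne 3) else 0))
    (hδ : δ = ((a0n : ℤ) - ((SS 1).max' (hne 1) : ℤ)) * ((SS 3).min' (hne 3) : ℤ) -
      ((SS 1).min' (hne 1) : ℤ) * ((a1m : ℤ) - ((SS 3).max' (hne 3) : ℤ)))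
    (hFne : F ≠ a0n) :
    (((0 ∉ SS 1 ∧ 0 ∉ SS 3) ∨ (a0n ∉ SS 1 ∧ a1m ∉ SS 3)) ∧ F' ≠ a1m) ∧
    ∃ G : MvPolynomial (Σ i : Fin 4, {s // s ∈ SS i}) ℂ, G ≠ 0 ∧
      ∀ c : (Σ i : Fin 4, {s // s ∈ SS i}) → ℂ, MvPolynomial.eval c G ≠ 0 →
        ∀ φ : MvPolynomial (Fin 2) ℂ, Irreducible φ → vanishesDiff SS c φ →
          ((a1m : ℝ), (F : ℝ)) ∈ Set.extremePoints ℝ (newtonPolygon φ) ∧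
          ((F' : ℝ), (a0n : ℝ)) ∈ Set.extremePoints ℝ (newtonPolygon φ) ∧
          (¬ ((0 ∉ SS 1 ∧ 0 ∉ SS 3 ∧ a0n ∉ SS 1 ∧ a1m ∉ SS 3) ∧ δ ≠ 0) →
            segment ℝ ((a1m : ℝ), (F : ℝ)) ((F' : ℝ), (a0n : ℝ)) ⊆
              frontier (newtonPolygon φ)) ∧
          ((0 ∉ SS 1 ∧ 0 ∉ SS 3 ∧ a0n ∉ SS 1 ∧ a1m ∉ SS 3) ∧ δ ≠ 0 →
            (if δ < 0 then
                (((a1m - (SS 3).min' (hne 3) : ℕ) : ℝ), (((SS 1).max' (hne 1) : ℕ) : ℝ))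
              else
                ((((SS 3).max' (hne 3) : ℕ) : ℝ), ((a0n - (SS 1).min' (hne 1) : ℕ) : ℝ)))
                ∈ Set.extremePoints ℝ (newtonPolygon φ) ∧
            segment ℝ ((a1m : ℝ), (F : ℝ))
              (if δ < 0 then
                  (((a1m - (SS 3).min' (hne 3) : ℕ) : ℝ), (((SS 1).max' (hne 1) : ℕ) : ℝ))
                else
                  ((((SS 3).max' (hne 3) : ℕ) : ℝ), ((a0n - (SS 1).min' (hne 1) : ℕ) : ℝ)))
              ⊆ frontier (newtonPolygon φ) ∧
            segment ℝ
              (if δ < 0 then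
                  (((a1m - (SS 3).min' (hne 3) : ℕ) : ℝ), (((SS 1).max' (hne 1) : ℕ) : ℝ))
                else
                  ((((SS 3).max' (hne 3) : ℕ) : ℝ), ((a0n - (SS 1).min' (hne 1) : ℕ) : ℝ)))
              ((F' : ℝ), (a0n : ℝ)) ⊆ frontier (newtonPolygon φ)) := by
  classical
  set L0 := (SS 1).min' (hne 1) with hL0
  set R0 := (SS 1).max' (hne 1) with hR0
  set L1 := (SS 3).min' (hne 3) with hL1
  set R1 := (SS 3).max' (hne 3) with hR1
  have hL0m : L0 ∈ SS 1 := Finset.min'_mem _ _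
  have hR0m : R0 ∈ SS 1 := Finset.max'_mem _ _
  have hL1m : L1 ∈ SS 3 := Finset.min'_mem _ _
  have hR1m : R1 ∈ SS 3 := Finset.max'_mem _ _
  have hL0l : ∀ s ∈ SS 1, L0 ≤ s := fun s hs => Finset.min'_le _ _ hs
  have hR0l : ∀ s ∈ SS 1, s ≤ R0 := fun s hs => Finset.le_max' _ _ hs
  have hL1l : ∀ s ∈ SS 3, L1 ≤ s := fun s hs => Finset.min'_le _ _ hs
  have hR1l : ∀ s ∈ SS 3, s ≤ R1 := fun s hs => Finset.le_max' _ _ hs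
  have mx1 : ∀ s ∈ SS 1, s ≤ a0n := fun s hs => ha0nmax s (Finset.mem_union_right _ hs)
  have mx3 : ∀ s ∈ SS 3, s ≤ a1m := fun s hs => ha1mmax s (Finset.mem_union_right _ hs)
  have mx0 : ∀ s ∈ SS 0, s ≤ a0n := fun s hs => ha0nmax s (Finset.mem_union_left _ hs)
  have mx2 : ∀ s ∈ SS 2, s ≤ a1m := fun s hs => ha1mmax s (Finset.mem_union_left _ hs)
  have hLR0 : L0 ≤ R0 := hL0l _ hR0m
  have hLR1 : L1 ≤ R1 := hL1l _ hR1m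
  have hRn : R0 ≤ a0n := mx1 _ hR0m
  have hRm : R1 ≤ a1m := mx3 _ hR1m
  have i1 : 0 ∈ SS 1 ↔ L0 = 0 :=
    ⟨fun h => Nat.le_zero.1 (hL0l 0 h), fun h => h ▸ hL0m⟩
  have i2 : a0n ∈ SS 1 ↔ R0 = a0n :=
    ⟨fun h => le_antisymm hRn (hR0l _ h), fun h => h ▸ hR0m⟩
  have i3 : 0 ∈ SS 3 ↔ L1 = 0 :=
    ⟨fun h => Nat.le_zero.1 (hL1l 0 h), fun h => h ▸ hL1m⟩
  have i4 : a1m ∈ SS 3 ↔ R1 = a1m :=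
    ⟨fun h => le_antisymm hRm (hR1l _ h), fun h => h ▸ hR1m⟩
  clear_value L0 R0 L1 R1
  have hg : ∀ d, (∀ s ∈ SS 0 ∪ SS 1, d ∣ s) → (∀ s ∈ SS 2 ∪ SS 3, d ∣ s) → d = 1 := by
    intro d h1 h2
    have : d ∣ ((SS 0 ∪ SS 1 ∪ SS 2 ∪ SS 3).filter (fun s => s ≠ 0)).gcd id := by
      apply Finset.dvd_gcd
      intro s hs
      have hs := (Finset.mem_filter.1 hs).1
      rw [Finset.union_assoc, Finset.mem_union] at hs
      exact hs.elim (h1 s) (h2 s)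
    rw [hgcd] at this
    exact Nat.dvd_one.1 this
  have hpole : (L0 ≠ 0 ∧ L1 ≠ 0) ∨ (R0 ≠ a0n ∧ R1 ≠ a1m) := by
    by_contra hc
    apply hFne
    rw [hF]
    simp only [i3, i4]
    split_ifs <;> omega
  refine ⟨⟨?_, ?_⟩, ?_⟩
  · rw [i1, i2, i3, i4]; exact hpole
  · rw [hF']
    simp only [i1, i2]
    split_ifs <;> omega
  have GV' : Gen SS (fun co => bcf (Rz (pl SS co 0) (pl SS co 1) (pl SS co 2) (pl SS co 3) a0n a1m) F' a0n ≠ 0) := by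
    have := Gen_V1 SS (i0 := 0) (i1 := 1) (i2 := 2) (i3 := 3) (by decide) a0n a1m (hne 1) (hne 3) h00 ha0nmem
      ha0nmax mx3 (by rw [i1, i2]; omega)
    rw [← hL1, ← hR1, ← hF'] at this
    exact this
  have GV : Gen SS (fun co => bcf (Rz (pl SS co 0) (pl SS co 1) (pl SS co 2) (pl SS co 3) a0n a1m) a1m F ≠ 0) := by
    have := Gen_V1 SS (i0 := 2) (i1 := 3) (i2 := 0) (i3 := 1) (by decide) a1m a0n (hne 3) (hne 1) h01 ha1mmem
      ha1mmax mx1 (by rw [i3, i4]; omega)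
    rw [← hL0, ← hR0, ← hF] at this
    exact Gen_swap this
  have hr0 : ∀ {s}, s ∈ SS 0 ∪ SS 1 → s ∉ SS 1 → s ∈ SS 0 := fun h h' => (Finset.mem_union.1 h).resolve_right h'
  have hr2 : ∀ {s}, s ∈ SS 2 ∪ SS 3 → s ∉ SS 3 → s ∈ SS 2 := fun h h' => (Finset.mem_union.1 h).resolve_right h'
  have GP : Gen SS (fun co => (0 ∉ SS 1 ∧ 0 ∉ SS 3 ∧ a0n ∉ SS 1 ∧ a1m ∉ SS 3) →
      bcf (Rz (pl SS co 0) (pl SS co 1) (pl SS co 2) (pl SS co 3) a0n a1m) R1 (a0n - L0) ≠ 0 ∧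
      bcf (Rz (pl SS co 0) (pl SS co 1) (pl SS co 2) (pl SS co 3) a0n a1m) (a1m - L1) R0 ≠ 0) := by
    by_cases h4 : (0 ∉ SS 1 ∧ 0 ∉ SS 3 ∧ a0n ∉ SS 1 ∧ a1m ∉ SS 3)
    · obtain ⟨k1, k2, k3, k4⟩ := h4
      have k1' := i1.not.1 k1
      have k2' := i3.not.1 k2
      have k3' := i2.not.1 k3
      have k4' := i4.not.1 k4
      have g1 := Gen_V2 SS (i0 := 0) (i1 := 1) (i2 := 2) (i3 := 3) (by decide) a0n a1m L0 R1 (hr0 ha0nmem k3)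
        (hr2 h01 k2) hL0m hR1m (by omega) (by omega) hRm
      have g2 := Gen_swap (Gen_V2 SS (i0 := 2) (i1 := 3) (i2 := 0) (i3 := 1) (by decide) a1m a0n L1 R0
        (hr2 ha1mmem k4) (hr0 h00 k1) hL1m hR0m (by omega) (by omega) hRn)
      exact (g1.and g2).mono fun c hc _ => hc
    · exact GV.mono fun c _ h => absurd h h4
  have GA0 := Gen_A SS (i0 := 0) (i1 := 1) (i2 := 2) (i3 := 3) (by decide) a0n (by omega) (hne 0) (hne 1) h00
    ha0nmem ha0nmax
  have GA1 := Gen_A SS (i0 := 2) (i1 := 3) (i2 := 0) (i3 := 1) (by decide) a1m (by omega) (hne 2) (hne 3) h01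
    ha1mmem ha1mmax
  have GB0 := Gen_B SS (i0 := 0) (i1 := 1) (i2 := 2) (i3 := 3) (by decide) a0n a1m (by omega) (by omega) (hne 2)
    (hne 3) h00 h01 ha0nmem ha0nmax ha1mmem ha1mmax hg
  have GB1 := Gen_B SS (i0 := 2) (i1 := 3) (i2 := 0) (i3 := 1) (by decide) a1m a0n (by omega) (by omega) (hne 0)
    (hne 1) h01 h00 ha1mmem ha1mmax ha0nmem ha0nmax (fun d h1 h2 => hg d h2 h1)
  obtain ⟨G, hG, hGc⟩ := (GV.and GV').and (GP.and ((GA0.and GA1).and (GB0.and GB1)))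
  refine ⟨G, hG, fun c hc φ hφ hv => ?_⟩
  obtain ⟨⟨v, v'⟩, vp, ⟨A0, A1⟩, B0, B1⟩ := hGc c hc
  have hs := implicit_eq (pl SS c 0) (pl SS c 1) (pl SS c 2) (pl SS c 3) a0n a1m (by omega) (by omega)
    (pl_natDegree mx0) (pl_natDegree mx1) (pl_natDegree mx2) (pl_natDegree mx3) A0 A1 B0 B1
    (by intro h; apply v; rw [h]; simp [bcf]) φ hφ hv
  have g : GeoHyp L0 (R0 - L0) (a0n - R0) L1 (R1 - L1) (a1m - R1) a0n a1m F F' (pl SS c 0) (pl SS c 1)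
      (pl SS c 2) (pl SS c 3) φ :=
    { en := by omega
      em := by omega
      b0 := fun k hk => by
        have h1 := hL0l k (pl_supp hk)
        have h2 := hR0l k (pl_supp hk)
        omega
      b1 := fun k hk => by
        have h1 := hL1l k (pl_supp hk)
        have h2 := hR1l k (pl_supp hk)
        omega
      hs := hs
      v := v
      v' := v' }
  have hδ' : δ = ((a0n - R0 : ℕ) : ℤ) * L1 - L0 * ((a1m - R1 : ℕ) : ℤ) := by
    rw [hδ, Nat.cast_sub hRn, Nat.cast_sub hRm]
  by_cases h4 : (0 ∉ SS 1 ∧ 0 ∉ SS 3 ∧ a0n ∉ SS 1 ∧ a1m ∉ SS 3)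
  · obtain ⟨w1, w2⟩ := vp h4
    have h4' := h4
    rw [i1, i2, i3, i4] at h4'
    obtain ⟨k1, k2, k3, k4⟩ := h4'
    have eF : F = R0 - L0 := by
      rw [hF, if_neg h4.2.1, if_neg h4.2.2.2]; omega
    have eF' : F' = R1 - L1 := by
      rw [hF', if_neg h4.1, if_neg h4.2.2.1]; omega
    rcases lt_trichotomy δ 0 with hd | hd | hd
    · obtain ⟨r1, r2, r3, r4, r5⟩ := g.bothneg (by omega) (by omega) (by omega) (by omega) eF eF' (by linarith)
        (i := a1m - L1) (j := R0) (by omega) (by omega) w2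
      refine ⟨r1, r2, fun h => absurd ⟨h4, hd.ne⟩ h, fun _ => ?_⟩
      rw [if_pos hd]
      exact ⟨r3, r4, r5⟩
    · obtain ⟨r1, r2, r3⟩ := g.both0 (by omega) (by omega) (by omega) (by omega) eF eF' (by linarith)
      exact ⟨r1, r2, fun _ => r3, fun h => absurd hd h.2⟩
    · obtain ⟨r1, r2, r3, r4, r5⟩ := g.bothpos (by omega) (by omega) (by omega) (by omega) eF eF' (by linarith)
        (i := R1) (j := a0n - L0) (by omega) (by omega) w1
      refine ⟨r1, r2, fun h => absurd ⟨h4, hd.ne'⟩ h, fun _ => ?_⟩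
      rw [if_neg hd.not_gt]
      exact ⟨r3, r4, r5⟩
  · have main : ((a1m : ℝ), (F : ℝ)) ∈ Set.extremePoints ℝ (newtonPolygon φ) ∧
        ((F' : ℝ), (a0n : ℝ)) ∈ Set.extremePoints ℝ (newtonPolygon φ) ∧
        segment ℝ ((a1m : ℝ), (F : ℝ)) ((F' : ℝ), (a0n : ℝ)) ⊆ frontier (newtonPolygon φ) := by
      rw [i1, i2, i3, i4] at h4
      simp only [i1, i2] at hF'
      simp only [i3, i4] at hF
      by_cases hp : L0 ≠ 0 ∧ L1 ≠ 0
      · refine g.c0 (by omega) (by omega) ?_ ?_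
        · rw [hF]; split_ifs <;> omega
        · rw [hF']; split_ifs <;> omega
      · refine g.c1 (by omega) (by omega) ?_ ?_
        · rw [hF]; split_ifs <;> omega
        · rw [hF']; split_ifs <;> omega
    exact ⟨main.1, main.2.1, fun _ => main.2.2, fun h => absurd h.1 h4⟩
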